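/- Suppose α has an adjusted nearest integer expansion, and let γ_* be the associated point. Then M(α,γ_*) ≥ (√10 − 3)(7 − √13)/(31 − 2√10 − 3√13) (= 1/25.159…). -/

import Mathlib

open Filter Finset

attribute [local instance] Classical.propDecidable

/-- Distance from `x` to the nearest integer, `‖x‖`. -/
noncomputable def nint (x : ℝ) : ℝ := |x - round x|

/-- The two-sided inhomogeneous approximation constant
`M(α,γ) = liminf_{|n|→∞} |n|·‖nα-γ‖`. -/
noncomputable def Mval (α γ : ℝ) : ℝ :=
  Filter.liminf (fun n : ℤ => (|n| : ℝ) * nint (n * α - γ)) Filter.cofinite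

/-- Denominators `q_i` of a semi-regular continued fraction with partial quotients `a`
and signs `e`: `q_0 = 1`, `q_1 = a_1`, `q_i = a_i q_{i-1} + ε_i q_{i-2}`. -/
noncomputable def qs (a e : ℕ → ℤ) : ℕ → ℤ
  | 0 => 1
  | 1 => a 1
  | i + 2 => a (i + 2) * qs a e (i + 1) + e (i + 2) * qs a e i

/-- Reversed tails `ᾱ_i = q_{i-1}/q_i` (with `ᾱ_0 = 0`). -/
noncomputable def ab (a e : ℕ → ℤ) (i : ℕ) : ℝ :=
  if i = 0 then 0 else (qs a e (i - 1) : ℝ) / (qs a e i : ℝ)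

/-- An adjusted nearest integer expansion of `α`: a semi-regular continued fraction
`α = 1/(a_1 + ε_2/(a_2 + ε_3/(a_3 + ⋯)))` with tails `t i = α_i`, satisfying the
conditions (i)-(iv) of an adjusted expansion. -/
structure ANIE (α : ℝ) where
  /-- partial quotients `a_i` (for `i ≥ 1`) -/
  a : ℕ → ℤ
  /-- signs `ε_i` -/
  e : ℕ → ℤ
  /-- tails: `t i = α_i`, `t 0 = α` -/
  t : ℕ → ℝ
  ha : ∀ i, 1 ≤ i → 2 ≤ a i
  he : ∀ i, e i = 1 ∨ e i = -1
  he1 : e 1 = 1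
  ht0 : t 0 = α
  htpos : ∀ i, 0 < t i
  htlt1 : ∀ i, t i < 1
  hrec : ∀ i, t i = 1 / ((a (i + 1) : ℝ) + (e (i + 2) : ℝ) * t (i + 1))
  /-- condition (i): `a_i = 2` implies `ε_i = +1` or `ε_{i+1} = +1` -/
  hcond1 : ∀ i, 1 ≤ i → a i = 2 → e i = 1 ∨ e (i + 1) = 1
  /-- condition (ii): if `a_i = 2`, `ε_i = -1` then `1/ᾱ_{i-1} - 1/α_i ≥ 1` -/
  hcond2 : ∀ i, 1 ≤ i → a i = 2 → e i = -1 → 1 / ab a e (i - 1) - 1 / t i ≥ 1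
  /-- condition (iii): if `a_i = 2`, `ε_{i+1} = -1` then `1/α_i - 1/ᾱ_{i-1} > 1` -/
  hcond3 : ∀ i, 1 ≤ i → a i = 2 → e (i + 1) = -1 → 1 / t i - 1 / ab a e (i - 1) > 1
  /-- condition (iv): no block `2, (-3,)^k, -2` in the sequence `(ε_i a_i)` -/
  hcond4 : ∀ i k, 1 ≤ i →
    ¬(e i * a i = 2 ∧ (∀ j, j < k → e (i + 1 + j) * a (i + 1 + j) = -3) ∧
        e (i + 1 + k) * a (i + 1 + k) = -2)

namespace ANIE

variable {α : ℝ}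

/-- `D n = D_{n-1} = α_0 α_1 ⋯ α_{n-1}` (so `D 0 = 1`, `D 1 = α`). -/
noncomputable def D (E : ANIE α) (n : ℕ) : ℝ := ∏ j ∈ Finset.range n, E.t j

/-- The number of indices `1 ≤ k ≤ i` with `a_k` odd. -/
noncomputable def oddIdx (E : ANIE α) (i : ℕ) : ℕ :=
  ((Finset.Icc 1 i).filter fun k => Odd (E.a k)).card

/-- `λ_i`: zero if `a_i` is even, `(-1)^j` if `a_i = a_{n_j}` is the `j`-th odd partial
quotient. -/
noncomputable def lam (E : ANIE α) (i : ℕ) : ℤ :=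
  if Odd (E.a i) then (-1) ^ E.oddIdx i else 0

/-- `γ_* = Σ_{i≥1} (a_i - 1 + ε_i + λ_i)/2 · D_{i-1}`. -/
noncomputable def gammaStar (E : ANIE α) : ℝ :=
  ∑' k : ℕ,
    (((E.a (k + 1) : ℝ) - 1 + (E.e (k + 1) : ℝ) + (E.lam (k + 1) : ℝ)) / 2) * E.D (k + 1)

/-- `ᾱ_i = q_{i-1}/q_i`. -/
noncomputable def abar (E : ANIE α) (i : ℕ) : ℝ := ab E.a E.e i

/-- `δ_i = -(-ε_1)(-ε_2)⋯(-ε_{i+1})`. -/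
noncomputable def delta (E : ANIE α) (i : ℕ) : ℤ := -∏ j ∈ Finset.Icc 1 (i + 1), (-E.e j)

/-- `d_n^- = (Σ_{i=1}^n t_i δ_{i-1} q_{i-1}) / (δ_{n-1} q_n)` for `γ_*` (`t_i = λ_i`). -/
noncomputable def dminus (E : ANIE α) (n : ℕ) : ℝ :=
  (∑ i ∈ Finset.Icc 1 n, (E.lam i : ℝ) * (E.delta (i - 1) : ℝ) * (qs E.a E.e (i - 1) : ℝ)) /
    ((E.delta (n - 1) : ℝ) * (qs E.a E.e n : ℝ))

/-- `d_n^+ = (Σ_{i=n+1}^∞ t_i D_{i-1}) / D_{n-1}` for `γ_*` (`t_i = λ_i`). -/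
noncomputable def dplus (E : ANIE α) (n : ℕ) : ℝ :=
  (∑' k : ℕ, (E.lam (n + 1 + k) : ℝ) * E.D (n + 1 + k)) / E.D n

/-- `i ∈ S(γ_*)`: `|d_i^-| ≤ 1 - ᾱ_i` and `-(1-ε_{i+1}α_i) ≤ d_i^+ ≤ 1+ε_{i+1}α_i`. -/
def inS (E : ANIE α) (i : ℕ) : Prop :=
  |E.dminus i| ≤ 1 - E.abar i ∧
    -(1 - (E.e (i + 1) : ℝ) * E.t i) ≤ E.dplus i ∧
      E.dplus i ≤ 1 + (E.e (i + 1) : ℝ) * E.t i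

end ANIE

/-!
Put `X = -1 - 2l` and `Y = 1 - 2m`. Up to the factor `|m| / |m - 1/2|`, the quantity
`|m| |m α - γ_* - l|` is a quarter of the product of two inhomogeneous linear forms at the odd
lattice point `(X, Y)`, normalised by their determinant. Every digit of the expansion acts by an
integral change of coordinates which preserves the odd lattice points and the normalised product,
and after finitely many digits the first coordinate stops decreasing. At that stage concavity of
the product along lines moves the point to one of `(±1, ±1)`, or both forms are large. Only
`(1, -1)` is critical: there the product is smallest when the reversed tail approaches
`[0; 3, 3, 3, …]` and the forward tail approaches `[0; 4, -2, 2, 2, -4, -2, 2, 2, …]`, and these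
two tails produce `√13` and `√10`.
-/

theorem forall_le_of_contraction {ι : Type*} {φ : ι → ℝ} {c C q : ℝ} (hq : 0 ≤ q) (hq1 : q < 1)
    (hC : 0 ≤ C) (hbound : ∀ i, φ i ≤ c + C)
    (hstep : ∀ δ, 0 ≤ δ → (∀ i, φ i ≤ c + δ) → ∀ i, φ i ≤ c + q * δ) (i : ι) : φ i ≤ c := by
  have hiter : ∀ k : ℕ, ∀ i, φ i ≤ c + q ^ k * C := by
    intro k
    induction k with
    | zero => simpa using hbound
    | succ k ih => simpa [pow_succ', mul_assoc] using hstep _ (by positivity) ih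
  have hlim : Tendsto (fun k : ℕ => c + q ^ k * C) atTop (nhds (c + 0 * C)) :=
    ((tendsto_pow_atTop_nhds_zero_of_lt_one hq hq1).mul_const C).const_add c
  simpa using ge_of_tendsto' hlim fun k => hiter k i

/-! ### Forward and reversed tails -/

/-- The analytic data of an adjusted nearest integer expansion with partial quotients `a` and
signs `e`: forward tails `t n = α_n` and reversed tails `u n = ᾱ_n`. Of the excluded blocks of
condition (iv), only `2, -2` and `2, -3, -2` are recorded. -/
structure AdjustedTails (a e : ℕ → ℤ) (t u : ℕ → ℝ) : Prop where
  two_le : ∀ n, 2 ≤ a (n + 1)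
  sign : ∀ n, e n = 1 ∨ e n = -1
  sign_one : e 1 = 1
  t_pos : ∀ n, 0 < t n
  t_lt_one : ∀ n, t n < 1
  t_mul : ∀ n, t n * (a (n + 1) + e (n + 2) * t (n + 1)) = 1
  u_zero : u 0 = 0
  u_mul : ∀ n, u (n + 1) * (a (n + 1) + e (n + 1) * u n) = 1
  sign_of_two : ∀ n, a (n + 1) = 2 → e (n + 1) = 1 ∨ e (n + 2) = 1
  u_mul_le : ∀ n, a (n + 1) = 2 → e (n + 1) = -1 → u n * (1 + t (n + 1)) ≤ t (n + 1)
  t_mul_lt : ∀ n, a (n + 1) = 2 → e (n + 2) = -1 → t (n + 1) * (1 + u n) < u n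
  not_two_neg_two : ∀ n, a (n + 1) = 2 → e (n + 1) = 1 → a (n + 2) = 2 → e (n + 2) ≠ -1
  not_two_neg_three_neg_two : ∀ n, a (n + 1) = 2 → e (n + 1) = 1 → a (n + 2) = 3 →
    e (n + 2) = -1 → a (n + 3) = 2 → e (n + 3) ≠ -1

namespace AdjustedTails

variable {a e : ℕ → ℤ} {t u : ℕ → ℝ} {n : ℕ}

theorem two_le_cast (S : AdjustedTails a e t u) (n : ℕ) : (2 : ℝ) ≤ a (n + 1) := by
  exact_mod_cast S.two_le n

theorem u_mem_Ico (S : AdjustedTails a e t u) (n : ℕ) : u n ∈ Set.Ico 0 1 := by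
  induction n with
  | zero => simp [S.u_zero]
  | succ n ih =>
    have hd : 1 < (a (n + 1) + e (n + 1) * u n : ℝ) := by
      rcases S.sign (n + 1) with h | h <;> push_cast [h] <;> linarith [S.two_le_cast n, ih.1, ih.2]
    rw [eq_one_div_of_mul_eq_one_left (S.u_mul n)]
    exact ⟨by positivity, (div_lt_one (by positivity)).2 hd⟩

theorem u_nonneg (S : AdjustedTails a e t u) (n : ℕ) : 0 ≤ u n := (S.u_mem_Ico n).1

theorem u_lt_one (S : AdjustedTails a e t u) (n : ℕ) : u n < 1 := (S.u_mem_Ico n).2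

theorem u_succ_pos (S : AdjustedTails a e t u) (n : ℕ) : 0 < u (n + 1) :=
  (S.u_nonneg _).lt_of_ne fun h => by simpa [← h] using S.u_mul n

theorem t_mul_lt_one (S : AdjustedTails a e t u) {c : ℝ}
    (h : c < a (n + 1) + e (n + 2) * t (n + 1)) : t n * c < 1 :=
  S.t_mul n ▸ mul_lt_mul_of_pos_left h (S.t_pos n)

theorem u_mul_le_one (S : AdjustedTails a e t u) {c : ℝ}
    (h : c ≤ a (n + 1) + e (n + 1) * u n) : u (n + 1) * c ≤ 1 :=
  S.u_mul n ▸ mul_le_mul_of_nonneg_left h (S.u_nonneg _)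

theorem t_lt_half (S : AdjustedTails a e t u) (h : e (n + 1) = -1) : t n < 1 / 2 := by
  suffices t n * 2 < 1 by linarith
  refine S.t_mul_lt_one ?_
  rcases (S.two_le n).eq_or_lt with h2 | h3
  · have hs : e (n + 2) = 1 := (S.sign_of_two n h2.symm).resolve_left (by simp [h])
    push_cast [← h2, hs]
    linarith [S.t_pos (n + 1)]
  · have h3 : (3 : ℝ) ≤ a (n + 1) := by exact_mod_cast h3
    rcases S.sign (n + 2) with hs | hs <;> push_cast [hs] <;>
      linarith [S.t_pos (n + 1), S.t_lt_one (n + 1)]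

theorem t_mul_sub_half_lt (S : AdjustedTails a e t u) (n : ℕ) : t n * (a (n + 1) - 1 / 2) < 1 := by
  refine S.t_mul_lt_one ?_
  rcases S.sign (n + 2) with hs | hs <;> push_cast [hs]
  · linarith [S.t_pos (n + 1)]
  · linarith [S.t_lt_half (n := n + 1) hs]

theorem t_lt_of_le (S : AdjustedTails a e t u) {k : ℤ} (hk : 2 ≤ k) (h : k ≤ a (n + 1)) :
    t n < 2 / (2 * k - 1) := by
  have hk : (2 : ℝ) ≤ k := by exact_mod_cast hk
  have h : (k : ℝ) ≤ a (n + 1) := by exact_mod_cast h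
  rw [lt_div_iff₀ (by linarith)]
  nlinarith [S.t_mul_sub_half_lt n, S.t_pos n]

theorem t_lt (S : AdjustedTails a e t u) (n : ℕ) : t n < 2 / 3 := by
  have := S.t_lt_of_le le_rfl (S.two_le n)
  norm_num at this
  exact this

theorem t_lt_of_three_le (S : AdjustedTails a e t u) (h : 3 ≤ a (n + 1)) : t n < 2 / 5 := by
  have := S.t_lt_of_le (by norm_num) h
  norm_num at this
  exact this

theorem t_lt_of_four_le (S : AdjustedTails a e t u) (h : 4 ≤ a (n + 1)) : t n < 2 / 7 := by
  have := S.t_lt_of_le (by norm_num) h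
  norm_num at this
  exact this

theorem u_le_half (S : AdjustedTails a e t u) (h : e (n + 1) = -1) : u n ≤ 1 / 2 := by
  cases n with
  | zero => norm_num [S.u_zero]
  | succ n =>
    suffices u (n + 1) * 2 ≤ 1 by linarith
    refine S.u_mul_le_one ?_
    rcases (S.two_le n).eq_or_lt with h2 | h3
    · have hs : e (n + 1) = 1 := (S.sign_of_two n h2.symm).resolve_right (by simp [h])
      push_cast [← h2, hs]
      linarith [S.u_nonneg n]
    · have h3 : (3 : ℝ) ≤ a (n + 1) := by exact_mod_cast h3
      rcases S.sign (n + 1) with hs | hs <;> push_cast [hs] <;>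
        linarith [S.u_nonneg n, S.u_lt_one n]

theorem u_mul_sub_half_le (S : AdjustedTails a e t u) (n : ℕ) :
    u (n + 1) * (a (n + 1) - 1 / 2) ≤ 1 := by
  refine S.u_mul_le_one ?_
  rcases S.sign (n + 1) with hs | hs <;> push_cast [hs]
  · linarith [S.u_nonneg n]
  · linarith [S.u_le_half hs]

theorem u_succ_le_of_le (S : AdjustedTails a e t u) {k : ℤ} (hk : 2 ≤ k) (h : k ≤ a (n + 1)) :
    u (n + 1) ≤ 2 / (2 * k - 1) := by
  have hk : (2 : ℝ) ≤ k := by exact_mod_cast hk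
  have h : (k : ℝ) ≤ a (n + 1) := by exact_mod_cast h
  rw [le_div_iff₀ (by linarith)]
  nlinarith [S.u_mul_sub_half_le n, S.u_succ_pos n]

theorem u_succ_le_of_three_le (S : AdjustedTails a e t u) (h : 3 ≤ a (n + 1)) :
    u (n + 1) ≤ 2 / 5 := by
  have := S.u_succ_le_of_le (by norm_num) h
  norm_num at this
  exact this

theorem u_succ_le_of_four_le (S : AdjustedTails a e t u) (h : 4 ≤ a (n + 1)) :
    u (n + 1) ≤ 2 / 7 := by
  have := S.u_succ_le_of_le (by norm_num) h
  norm_num at this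
  exact this

/-- Condition (ii) keeps `u n` below `2/5` before a digit `-2`, so the crude bound `2/3` never
occurs. -/
theorem u_le (S : AdjustedTails a e t u) (n : ℕ) : u n ≤ 5 / 8 := by
  cases n with
  | zero => norm_num [S.u_zero]
  | succ n =>
    suffices u (n + 1) * (8 / 5) ≤ 1 by linarith
    refine S.u_mul_le_one ?_
    rcases S.sign (n + 1) with hs | hs <;> push_cast [hs]
    · linarith [S.two_le_cast n, S.u_nonneg n]
    rcases (S.two_le n).eq_or_lt with h2 | h3
    · have : u n ≤ 2 / 5 := by
        nlinarith [S.u_mul_le n h2.symm hs, S.t_lt (n + 1), S.t_pos (n + 1)]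
      push_cast [← h2]
      linarith
    · have h3 : (3 : ℝ) ≤ a (n + 1) := by exact_mod_cast h3
      linarith [S.u_lt_one n]

theorem u_succ_eq_div (S : AdjustedTails a e t u) {p q : ℝ} (hq : q ≠ 0) (h : u n = p / q) :
    u (n + 1) = q / (a (n + 1) * q + e (n + 1) * p) := by
  rw [eq_one_div_of_mul_eq_one_left (S.u_mul n), h]
  field_simp

theorem one_le_u_succ_mul (S : AdjustedTails a e t u) (n : ℕ) :
    1 ≤ u (n + 1) * (a (n + 1) + 5 / 8) := by
  rw [← S.u_mul n]
  refine mul_le_mul_of_nonneg_left ?_ (S.u_nonneg _)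
  rcases S.sign (n + 1) with he | he <;> push_cast [he] <;> linarith [S.u_le n, S.u_nonneg n]

theorem t_mul_lt_of_u_eq_div (S : AdjustedTails a e t u) {p q : ℝ} (h2 : a (n + 1) = 2)
    (he : e (n + 2) = -1) (hq : 0 < q) (h : u n = p / q) : t (n + 1) * (q + p) < p := by
  have := S.t_mul_lt n h2 he
  rw [h, lt_div_iff₀ hq] at this
  calc t (n + 1) * (q + p) = t (n + 1) * (1 + p / q) * q := by field_simp
    _ < p := this

theorem sign_eq_one_of_two (S : AdjustedTails a e t u) (h2 : a (n + 1) = 2)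
    (he : e (n + 2) = -1) : e (n + 1) = 1 :=
  (S.sign_of_two n h2).resolve_right (by simp [he])

theorem sign_succ_eq_one_of_two (S : AdjustedTails a e t u) (h2 : a (n + 1) = 2)
    (he : e (n + 1) = -1) : e (n + 2) = 1 :=
  (S.sign_of_two n h2).resolve_left (by simp [he])

theorem three_le (S : AdjustedTails a e t u) (h : a (n + 1) ≠ 2) : 3 ≤ a (n + 1) := by
  have := S.two_le n
  omega

theorem digits_of_half_le_t (S : AdjustedTails a e t u) (h : 1 / 2 ≤ t n) :
    a (n + 1) = 2 ∧ e (n + 2) = -1 := by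
  have h2 : a (n + 1) = 2 := by
    by_contra h2
    linarith [S.t_lt_of_three_le (S.three_le h2)]
  refine ⟨h2, (S.sign _).resolve_left fun he => ?_⟩
  have : t n * 2 < 1 := S.t_mul_lt_one (by push_cast [h2, he]; linarith [S.t_pos (n + 1)])
  linarith

theorem u_eq_of_two_neg_three (S : AdjustedTails a e t u) (h2 : a (n + 1) = 2)
    (h3 : a (n + 2) = 3) (he : e (n + 2) = -1) : u (n + 2) = (2 + u n) / (5 + 3 * u n) := by
  have hs := S.sign_eq_one_of_two h2 he
  have hu := S.u_nonneg n
  have hu1 : u (n + 1) = 1 / (2 + u n) :=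
    (S.u_succ_eq_div one_ne_zero (div_one (u n)).symm).trans (by push_cast [h2, hs]; ring)
  exact (S.u_succ_eq_div (by positivity) hu1).trans (by push_cast [h3, he]; ring)

theorem lt_of_two_neg_three_two_neg (S : AdjustedTails a e t u) (h1 : a (n + 1) = 2)
    (e2 : e (n + 2) = -1) (h2 : a (n + 2) = 3) (h3 : a (n + 3) = 2) (e4 : e (n + 4) = -1)
    (hu : u (n + 2) = (2 + u n) / (5 + 3 * u n)) : 12 + 7 * u n < u n * (31 + 18 * u n) := by
  have e3 := S.sign_eq_one_of_two h3 e4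
  have hw := S.u_nonneg n
  have ht3 := S.t_mul_lt_of_u_eq_div h3 e4 (by linarith) hu
  have ht1 := S.t_mul_lt n h1 e2
  have ht2 := S.t_mul (n + 2)
  have hrec := S.t_mul (n + 1)
  push_cast [h2, h3, e3, e4] at hrec ht2
  have hlt2 : t (n + 2) * (12 + 7 * u n) < 7 + 4 * u n := by
    nlinarith [mul_lt_mul_of_pos_left ht3 (S.t_pos (n + 2))]
  have hlt1 : 1 < u n * (2 + t (n + 2)) := by
    nlinarith [mul_lt_mul_of_pos_right ht1 (by linarith [S.t_pos (n + 2)] : 0 < 3 + t (n + 2))]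
  nlinarith

theorem lt_of_two_neg_three (S : AdjustedTails a e t u) (h3 : a (n + 3) = 2) (h4 : a (n + 4) = 3)
    (e4 : e (n + 4) = -1) (hu : u (n + 2) = (2 + u n) / (5 + 3 * u n)) :
    u n * (43 + 25 * u n) < (1 + u n) * (12 + 7 * u n) := by
  have e3 := S.sign_eq_one_of_two h3 e4
  have hw := S.u_nonneg n
  have ht3 := S.t_mul_lt_of_u_eq_div h3 e4 (by linarith) hu
  have hrec3 := S.t_mul (n + 3)
  push_cast [h4] at hrec3
  have hlt : 7 + 4 * u n < (2 + u n) * (3 + e (n + 5) * t (n + 4)) := by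
    by_contra! hle
    nlinarith [mul_le_mul_of_nonneg_left hle (S.t_pos (n + 3)).le]
  have e5 : e (n + 5) = 1 := (S.sign _).resolve_right fun h => by
    push_cast [h] at hlt
    nlinarith [S.t_pos (n + 4)]
  push_cast [e5] at hlt
  obtain ⟨h5, e6⟩ := S.digits_of_half_le_t (n := n + 4) (by nlinarith)
  have hrec4 := S.t_mul (n + 4)
  push_cast [h5, e6] at hrec4
  have hu3 := S.u_succ_eq_div (by positivity) hu
  have hu4 := S.u_succ_eq_div (by push_cast [h3, e3]; positivity) hu3
  push_cast [h3, e3, h4, e4] at hu4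
  have ht5 := S.t_mul_lt_of_u_eq_div h5 e6 (by linarith) hu4
  have hlt5 : u n < (1 + u n) * t (n + 5) := by
    by_contra! hle
    nlinarith [mul_le_mul_of_nonneg_left hle (S.t_pos (n + 4)).le]
  nlinarith [mul_lt_mul_of_pos_left hlt5 (by linarith : 0 < 43 + 25 * u n)]

theorem not_two_neg_three_two_neg_three (S : AdjustedTails a e t u) (h1 : a (n + 1) = 2)
    (e2 : e (n + 2) = -1) (h2 : a (n + 2) = 3) (h3 : a (n + 3) = 2) (e4 : e (n + 4) = -1) :
    a (n + 4) ≠ 3 := by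
  intro h4
  have hu := S.u_eq_of_two_neg_three h1 h2 e2
  nlinarith [S.u_nonneg n, S.lt_of_two_neg_three_two_neg h1 e2 h2 h3 e4 hu,
    S.lt_of_two_neg_three h3 h4 e4 hu]

theorem one_lt_u_mul_of_two_neg_three (S : AdjustedTails a e t u) (h2 : a (n + 1) = 2)
    (h3 : a (n + 2) = 3) (he : e (n + 2) = -1) : 1 < u n * (2 + e (n + 3) * t (n + 2)) := by
  have ht : t (n + 1) * (a (n + 2) + e (n + 3) * t (n + 2)) = 1 := S.t_mul (n + 1)
  have hc := S.t_mul_lt n h2 he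
  push_cast [h3] at ht
  by_contra! hle
  linarith [mul_le_mul_of_nonneg_left hle (S.t_pos (n + 1)).le, congrArg (u n * ·) ht]

theorem three_eighths_lt_u (S : AdjustedTails a e t u) (h2 : a (n + 1) = 2)
    (h3 : a (n + 2) = 3) (he : e (n + 2) = -1) : 3 / 8 < u n := by
  have hlt := S.one_lt_u_mul_of_two_neg_three h2 h3 he
  rcases S.sign (n + 3) with hs | hs <;> push_cast [hs] at hlt <;>
    nlinarith [S.t_lt (n + 2), S.t_pos (n + 2), S.u_nonneg n]

theorem digits_of_two_neg_three_neg (S : AdjustedTails a e t u) (h2 : a (n + 1) = 2)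
    (h3 : a (n + 2) = 3) (he : e (n + 2) = -1) (he' : e (n + 3) = -1) :
    n ≠ 0 ∧ a n = 2 ∧ e n = -1 := by
  have hlt := S.one_lt_u_mul_of_two_neg_three h2 h3 he
  push_cast [he'] at hlt
  have hhalf : 1 / 2 < u n := by nlinarith [S.u_nonneg n, S.t_pos (n + 2)]
  obtain _ | k := n
  · norm_num [S.u_zero] at hhalf
  have ha : a (k + 1) = 2 := by
    by_contra h
    linarith [S.u_succ_le_of_three_le (S.three_le h)]
  refine ⟨k.succ_ne_zero, ha, (S.sign _).resolve_left fun hs => ?_⟩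
  have := S.u_mul k
  push_cast [ha, hs] at this
  nlinarith [S.u_nonneg k]

end AdjustedTails

/-! ### The extremal constants -/

/-- The tail `[0; 3, 3, 3, …]`, the reciprocal of the bronze mean. -/
noncomputable def bronzeInv : ℝ := (√13 - 3) / 2

theorem bronzeInv_sq : bronzeInv ^ 2 + 3 * bronzeInv = 1 := by
  have h := Real.sq_sqrt (show (0 : ℝ) ≤ 13 by norm_num)
  unfold bronzeInv
  linear_combination h / 4

theorem bronzeInv_gt : 0.3027 < bronzeInv := by
  have : 3.6054 < √13 := Real.lt_sqrt_of_sq_lt (by norm_num)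
  unfold bronzeInv
  linarith

theorem bronzeInv_lt : bronzeInv < 0.3028 := by
  have : √13 < 3.6056 := (Real.sqrt_lt' (by norm_num)).2 (by norm_num)
  unfold bronzeInv
  linarith

/-- The tail `ξ = [0; 4, -2, 2, 2, -4, -2, 2, 2, -4, …]`, the largest value of
`t n - g n` before the critical digits. The other tails of this periodic expansion are `3ξ/2`,
`(2 - 3ξ)/3` and `(2 - 3ξ)/2`. -/
noncomputable def extremalTail : ℝ := (4 - √10) / 3

theorem extremalTail_sq : 3 * extremalTail ^ 2 - 8 * extremalTail + 2 = 0 := by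
  have h := Real.sq_sqrt (show (0 : ℝ) ≤ 10 by norm_num)
  unfold extremalTail
  linear_combination h / 3

theorem extremalTail_gt : 0.2792 < extremalTail := by
  have : √10 < 3.1623 := (Real.sqrt_lt' (by norm_num)).2 (by norm_num)
  unfold extremalTail
  linarith

theorem extremalTail_lt : extremalTail < 0.2793 := by
  have : 3.1622 < √10 := Real.lt_sqrt_of_sq_lt (by norm_num)
  unfold extremalTail
  linarith

/-- Four times the bound of the theorem; the extremal reversed and forward tails enter through
`bronzeInv` and `extremalTail`. -/
noncomputable def extremalValue : ℝ :=
  (8 - 4 * bronzeInv) * (1 - extremalTail) /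
    (3 * (13 - 5 * bronzeInv - extremalTail * (5 - 2 * bronzeInv)))

theorem extremalValue_le : extremalValue ≤ 0.159 := by
  have h1 := bronzeInv_gt
  have h2 := bronzeInv_lt
  have h3 := extremalTail_gt
  have h4 := extremalTail_lt
  unfold extremalValue
  rw [div_le_iff₀ (by nlinarith)]
  nlinarith

theorem extremalValue_eq :
    extremalValue / 4 = (√10 - 3) * (7 - √13) / (31 - 2 * √10 - 3 * √13) := by
  have h1 := bronzeInv_gt
  have h2 := bronzeInv_lt
  have h3 := extremalTail_gt
  have h4 := extremalTail_lt
  have hden : 3 * (13 - 5 * bronzeInv - extremalTail * (5 - 2 * bronzeInv)) ≠ 0 := by nlinarith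
  have h13 : √13 = 2 * bronzeInv + 3 := by unfold bronzeInv; ring
  have hx : √10 = 4 - 3 * extremalTail := by unfold extremalTail; ring
  have hden' : 31 - 2 * (4 - 3 * extremalTail) - 3 * (2 * bronzeInv + 3) ≠ 0 := by nlinarith
  rw [h13, hx]
  unfold extremalValue
  rw [div_div, div_eq_div_iff (by simpa using hden) hden']
  linear_combination (224 * bronzeInv - 256 - 48 * bronzeInv ^ 2) * extremalTail_sq

/-! ### Bounds for the past and future sums -/

theorem bounds_of_mul_eq_one {v d y : ℝ} (hv : 0 ≤ v) (hd : v * d = 1) (h1 : 1 - d ≤ 3 * y)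
    (h2 : 3 * y ≤ d + 1) (h3 : y ≤ d - 1) (h4 : -y ≤ d - 1) :
    v - 1 ≤ 3 * (v * y) ∧ 3 * (v * y) ≤ 1 + v ∧ v * y ≤ 1 - v ∧ -(v * y) ≤ 1 - v :=
  ⟨by linarith [mul_le_mul_of_nonneg_left h1 hv], by linarith [mul_le_mul_of_nonneg_left h2 hv],
    by linarith [mul_le_mul_of_nonneg_left h3 hv], by linarith [mul_le_mul_of_nonneg_left h4 hv]⟩

/-- `f` and `g` are the past and future sums of `γ_*`, normalised by the sign of the next odd
digit; in the notation of the paper they are `±d_n^-` and `±d_n^+`. -/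
structure AdjustedSystem (a e : ℕ → ℤ) (t u f g : ℕ → ℝ) : Prop extends
    AdjustedTails a e t u where
  f_zero : f 0 = 0
  f_succ_of_even : ∀ n, Even (a (n + 1)) → f (n + 1) = -(u (n + 1) * (e (n + 1) * f n))
  f_succ_of_odd : ∀ n, Odd (a (n + 1)) → f (n + 1) = u (n + 1) * (1 + e (n + 1) * f n)
  g_nonneg : ∀ n, 0 ≤ g n
  g_le : ∀ n, g n ≤ t n
  g_of_even : ∀ n, Even (a (n + 1)) → g n = t n * g (n + 1)
  g_of_odd : ∀ n, Odd (a (n + 1)) → g n = t n * (1 - g (n + 1))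

namespace AdjustedSystem

variable {a e : ℕ → ℤ} {t u f g : ℕ → ℝ} {n : ℕ}

theorem past_bounds (S : AdjustedSystem a e t u f g) (n : ℕ) :
    u n - 1 ≤ 3 * f n ∧ 3 * f n ≤ 1 + u n ∧ f n ≤ 1 - u n ∧ -f n ≤ 1 - u n := by
  induction n with
  | zero => norm_num [S.u_zero, S.f_zero]
  | succ n ih =>
    obtain ⟨h1, h2, h3, h4⟩ := ih
    have hu := S.u_nonneg n
    have hu1 := S.u_lt_one n
    rcases Int.even_or_odd (a (n + 1)) with ha | ha
    · have ha2 := S.two_le_cast n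
      rw [S.f_succ_of_even n ha, ← mul_neg]
      apply bounds_of_mul_eq_one (S.u_nonneg _) (S.u_mul n) <;>
        rcases S.sign (n + 1) with he | he <;> push_cast [he] <;> linarith
    · have ha3 : (3 : ℝ) ≤ a (n + 1) := by
        exact_mod_cast S.three_le fun h2 => absurd (h2 ▸ ha) (by decide)
      rw [S.f_succ_of_odd n ha]
      apply bounds_of_mul_eq_one (S.u_nonneg _) (S.u_mul n) <;>
        rcases S.sign (n + 1) with he | he <;> push_cast [he] <;> linarith

theorem t_add_g_le_one (S : AdjustedSystem a e t u f g) (n : ℕ) : t n + g n ≤ 1 := by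
  rcases (S.two_le n).eq_or_lt with h2 | h3
  · have ht := S.t_mul n
    rcases S.sign (n + 2) with he | he <;> push_cast [← h2, he] at ht
    · nlinarith [S.g_le n, mul_pos (S.t_pos n) (S.t_pos (n + 1))]
    · have hg := S.g_of_even n ⟨1, h2.symm⟩
      nlinarith [S.t_pos n, S.t_lt_half (n := n + 1) he, S.g_le (n + 1)]
  · linarith [S.t_lt_of_three_le h3, S.g_le n]

theorem abs_f_le_half (S : AdjustedSystem a e t u f g) (n : ℕ) : |f n| ≤ 1 / 2 := by
  obtain ⟨h1, h2, h3, -⟩ := S.past_bounds n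
  exact abs_le.2 ⟨by linarith [S.u_nonneg n], by linarith⟩

theorem abs_sign_mul_f_le_half (S : AdjustedSystem a e t u f g) (n : ℕ) :
    |e (n + 1) * f n| ≤ 1 / 2 := by
  rcases S.sign (n + 1) with he | he <;> simpa [he] using S.abs_f_le_half n

theorem half_mul_u_le_f_of_odd (S : AdjustedSystem a e t u f g) (ha : Odd (a (n + 1))) :
    1 / 2 * u (n + 1) ≤ f (n + 1) := by
  rw [S.f_succ_of_odd n ha]
  nlinarith [(abs_le.1 (S.abs_sign_mul_f_le_half n)).1, S.u_nonneg (n + 1)]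

theorem upper_succ_of_three_pos (S : AdjustedSystem a e t u f g) (h3 : a (n + 1) = 3)
    (he : e (n + 1) = 1) :
    1 + u (n + 1) - 3 * f (n + 1) = u (n + 1) * (1 + u n - 3 * f n) := by
  have hu := S.u_mul n
  have hf := S.f_succ_of_odd n ⟨1, h3⟩
  push_cast [h3, he] at hu hf
  linear_combination -hu - 3 * hf

theorem upper_succ_of_three_neg (S : AdjustedSystem a e t u f g) (h3 : a (n + 1) = 3)
    (he : e (n + 1) = -1) :
    1 + u (n + 1) - 3 * f (n + 1) = u (n + 1) * (1 - u n + 3 * f n) := by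
  have hu := S.u_mul n
  have hf := S.f_succ_of_odd n ⟨1, h3⟩
  push_cast [h3, he] at hu hf
  linear_combination -hu - 3 * hf

theorem lower_succ_of_two_pos (S : AdjustedSystem a e t u f g) (h2 : a (n + 1) = 2)
    (he : e (n + 1) = 1) :
    1 - u (n + 1) + 3 * f (n + 1) = u (n + 1) * (1 + u n - 3 * f n) := by
  have hu := S.u_mul n
  have hf := S.f_succ_of_even n ⟨1, h2⟩
  push_cast [h2, he] at hu hf
  linear_combination -hu + 3 * hf

theorem three_sevenths_le_lower (S : AdjustedSystem a e t u f g) (h : n ≠ 0 → a n ≠ 2) :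
    3 / 7 ≤ 1 - u n + 3 * f n := by
  obtain _ | n := n
  · norm_num [S.u_zero, S.f_zero]
  rcases Int.even_or_odd (a (n + 1)) with ha | ha
  · have h4 : (4 : ℝ) ≤ a (n + 1) := by
      have := S.three_le (h n.succ_ne_zero)
      exact_mod_cast show 4 ≤ a (n + 1) by grind
    have hu := S.u_mul n
    have key : u (n + 1) * (a (n + 1) - 2) ≤ 1 - u (n + 1) + 3 * f (n + 1) := by
      rw [S.f_succ_of_even n ha]
      rcases S.sign (n + 1) with he | he <;> push_cast [he] at hu ⊢ <;>
        nlinarith [S.past_bounds n, S.u_nonneg (n + 1)]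
    nlinarith [S.one_le_u_succ_mul n, S.u_nonneg (n + 1)]
  · linarith [S.half_mul_u_le_f_of_odd ha, S.u_le (n + 1), S.u_nonneg (n + 1)]

theorem half_le_upper_of_two (S : AdjustedSystem a e t u f g) (h2 : a (n + 1) = 2) :
    1 / 2 ≤ 1 + u (n + 1) - 3 * f (n + 1) := by
  have hu := S.u_mul n
  have hp := S.u_succ_pos n
  obtain ⟨h1, h3, -, -⟩ := S.past_bounds n
  rw [S.f_succ_of_even n ⟨1, h2⟩]
  rcases S.sign (n + 1) with he | he <;> push_cast [h2, he] at hu ⊢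
  · nlinarith [mul_nonneg hp.le (S.u_nonneg n)]
  · nlinarith [S.u_le_half he]

theorem third_le_upper_of_four_le (S : AdjustedSystem a e t u f g) (h4 : 4 ≤ a (n + 1)) :
    0.33 ≤ 1 + u (n + 1) - 3 * f (n + 1) := by
  have hu := S.u_mul n
  have hlow := S.one_le_u_succ_mul n
  have hp := S.u_succ_pos n
  obtain ⟨h1, h3, -, -⟩ := S.past_bounds n
  rcases Int.even_or_odd (a (n + 1)) with ha | ha
  · have key : u (n + 1) * (a (n + 1) - 1) ≤ 1 + u (n + 1) - 3 * f (n + 1) := by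
      rw [S.f_succ_of_even n ha]
      rcases S.sign (n + 1) with he | he <;> push_cast [he] at hu ⊢
      · nlinarith [S.u_nonneg n]
      · nlinarith [S.u_le_half he]
    have h4 : (4 : ℝ) ≤ a (n + 1) := by exact_mod_cast h4
    nlinarith
  · have key : u (n + 1) * (a (n + 1) - 3) ≤ 1 + u (n + 1) - 3 * f (n + 1) := by
      rw [S.f_succ_of_odd n ha]
      rcases S.sign (n + 1) with he | he <;> push_cast [he] at hu ⊢ <;> nlinarith
    have h5 : (5 : ℝ) ≤ a (n + 1) := by exact_mod_cast show 5 ≤ a (n + 1) by grind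
    nlinarith

theorem upper_ge_of_two_neg_three (S : AdjustedSystem a e t u f g) (h2 : a (n + 1) = 2)
    (h3 : a (n + 2) = 3) (he : e (n + 2) = -1) : 3 / 20 ≤ 1 + u n - 3 * f n := by
  have hu := S.three_eighths_lt_u h2 h3 he
  obtain _ | n := n
  · norm_num [S.u_zero] at hu
  by_cases h2' : a (n + 1) = 2
  · linarith [S.half_le_upper_of_two h2']
  have h3' : a (n + 1) = 3 := by
    by_contra hne
    have := S.three_le h2'
    linarith [S.u_succ_le_of_four_le (by omega : 4 ≤ a (n + 1))]
  have he' : e (n + 1) = -1 := (S.sign _).resolve_left fun hs => by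
    have := S.u_mul_le_one (n := n) (c := 3) (by push_cast [h3', hs]; linarith [S.u_nonneg n])
    linarith
  rw [S.upper_succ_of_three_neg h3' he']
  have hlow : 3 / 7 ≤ 1 - u n + 3 * f n := by
    refine S.three_sevenths_le_lower fun hn hk => ?_
    obtain ⟨k, rfl⟩ := Nat.exists_eq_succ_of_ne_zero hn
    exact S.not_two_neg_three_two_neg_three hk he' h3' h2 he h3
  nlinarith

theorem lower_ge_of_neg_three (S : AdjustedSystem a e t u f g) (h3 : a (n + 1) = 3)
    (he : e (n + 1) = -1) : 1 / 20 ≤ 1 - u n + 3 * f n := by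
  by_cases h : n ≠ 0 → a n ≠ 2
  · linarith [S.three_sevenths_le_lower h]
  obtain ⟨hn, h2⟩ : n ≠ 0 ∧ a n = 2 := by simpa using h
  obtain ⟨n, rfl⟩ := Nat.exists_eq_succ_of_ne_zero hn
  have he' := S.sign_eq_one_of_two h2 he
  have hu := S.u_mul n
  push_cast [Nat.succ_eq_add_one, h2, he'] at hu
  rw [S.lower_succ_of_two_pos h2 he']
  nlinarith [S.upper_ge_of_two_neg_three h2 h3 he, S.u_le n, S.u_nonneg n, S.u_nonneg (n + 1)]

theorem u_succ_sub_bronzeInv (S : AdjustedSystem a e t u f g) (h3 : a (n + 1) = 3)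
    (he : e (n + 1) = 1) :
    u (n + 1) - bronzeInv = u (n + 1) * (bronzeInv * (bronzeInv - u n)) := by
  have hu := S.u_mul n
  push_cast [h3, he] at hu
  linear_combination bronzeInv * hu - u (n + 1) * bronzeInv_sq

theorem upper_ge_succ_of_three_pos (S : AdjustedSystem a e t u f g) (h3 : a (n + 1) = 3)
    (he : e (n + 1) = 1) (ih : 0.33 * (bronzeInv - u n) ≤ 1 + u n - 3 * f n)
    (ih' : 0.1 * (u n - bronzeInv) ≤ 1 + u n - 3 * f n) :
    0.33 * (bronzeInv - u (n + 1)) ≤ 1 + u (n + 1) - 3 * f (n + 1) ∧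
      0.1 * (u (n + 1) - bronzeInv) ≤ 1 + u (n + 1) - 3 * f (n + 1) := by
  have hβ := bronzeInv_gt
  have hβ' := bronzeInv_lt
  have hp := S.u_succ_pos n
  have hdiff := S.u_succ_sub_bronzeInv h3 he
  rw [S.upper_succ_of_three_pos h3 he]
  have k1 : 0.33 * (bronzeInv * (u n - bronzeInv)) ≤ 1 + u n - 3 * f n := by
    rcases le_total bronzeInv (u n) with h | h <;> nlinarith [(S.past_bounds n).2.1]
  have k2 : 0.1 * (bronzeInv * (bronzeInv - u n)) ≤ 1 + u n - 3 * f n := by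
    rcases le_total bronzeInv (u n) with h | h <;> nlinarith [(S.past_bounds n).2.1]
  constructor
  · linarith [mul_le_mul_of_nonneg_left k1 hp.le]
  · linarith [mul_le_mul_of_nonneg_left k2 hp.le]

theorem upper_ge (S : AdjustedSystem a e t u f g) (n : ℕ) :
    0.33 * (bronzeInv - u n) ≤ 1 + u n - 3 * f n ∧
      0.1 * (u n - bronzeInv) ≤ 1 + u n - 3 * f n := by
  have hβ := bronzeInv_gt
  have hβ' := bronzeInv_lt
  induction n with
  | zero => norm_num [S.u_zero, S.f_zero]; constructor <;> linarith
  | succ n ih =>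
    have hle := S.u_le (n + 1)
    have hp := S.u_succ_pos n
    by_cases h2 : a (n + 1) = 2
    · have := S.half_le_upper_of_two h2
      constructor <;> linarith
    by_cases h3 : a (n + 1) = 3
    · rcases S.sign (n + 1) with he | he
      · exact S.upper_ge_succ_of_three_pos h3 he ih.1 ih.2
      · rw [S.upper_succ_of_three_neg h3 he]
        have hlow := S.lower_ge_of_neg_three h3 he
        have hhalf := S.u_le_half he
        have hu := S.u_mul n
        have hu0 := S.u_nonneg n
        push_cast [h3, he] at hu
        constructor <;> nlinarith
    · have h4 : 4 ≤ a (n + 1) := by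
        have := S.three_le h2
        omega
      have hup := S.third_le_upper_of_four_le h4
      have hlt := S.u_succ_le_of_four_le h4
      constructor <;> linarith

theorem upper_ge_of_neg_two (S : AdjustedSystem a e t u f g) (h2 : a (n + 1) = 2)
    (he : e (n + 1) = -1) : 1.07 * (u n - bronzeInv) ≤ 1 + u n - 3 * f n := by
  have hβ := bronzeInv_gt
  have hβ' := bronzeInv_lt
  have hnn := (S.past_bounds n).2.1
  rcases lt_or_ge (u n) bronzeInv with hlt | hle
  · linarith
  obtain _ | n := n
  · linarith [S.u_zero]
  have hne2 : a (n + 1) ≠ 2 := fun h =>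
    S.not_two_neg_two n h (S.sign_eq_one_of_two h he) h2 he
  have h3 : a (n + 1) = 3 := by
    by_contra h3
    have := S.three_le hne2
    linarith [S.u_succ_le_of_four_le (by omega : 4 ≤ a (n + 1))]
  have hp := S.u_succ_pos n
  rcases S.sign (n + 1) with hs | hs
  · rw [S.upper_succ_of_three_pos h3 hs]
    have hdiff := S.u_succ_sub_bronzeInv h3 hs
    have hge : u n ≤ bronzeInv := by
      by_contra! h
      nlinarith [mul_pos hp (mul_pos (by linarith : 0 < bronzeInv) (sub_pos.2 h))]
    nlinarith [mul_le_mul_of_nonneg_left (S.upper_ge n).1 hp.le,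
      mul_nonneg hp.le (sub_nonneg.2 hge)]
  · rw [S.upper_succ_of_three_neg h3 hs]
    have hlow : 3 / 7 ≤ 1 - u n + 3 * f n := by
      refine S.three_sevenths_le_lower fun hn hk => ?_
      obtain ⟨k, rfl⟩ := Nat.exists_eq_succ_of_ne_zero hn
      exact S.not_two_neg_three_neg_two k hk (S.sign_eq_one_of_two hk hs) h3 hs h2 he
    nlinarith [S.u_succ_le_of_three_le (by omega : 3 ≤ a (n + 1))]

theorem t_sub_g_le_mul (S : AdjustedSystem a e t u f g) (ha : Odd (a (n + 1))) :
    t n - g n ≤ t n * t (n + 1) := by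
  rw [S.g_of_odd n ha]
  nlinarith [S.t_pos n, S.g_le (n + 1)]

theorem t_sub_g_le_of_not_four_neg_two (S : AdjustedSystem a e t u f g) (h3 : 3 ≤ a (n + 1))
    (h : ¬(a (n + 1) = 4 ∧ e (n + 2) = -1 ∧ a (n + 2) = 2)) : t n - g n ≤ extremalTail := by
  have hξ := extremalTail_gt
  have ht := S.t_mul n
  have hp := S.t_pos n
  have hp' := S.t_pos (n + 1)
  rcases h3.eq_or_lt with h3 | h4
  · have hle := S.t_sub_g_le_mul (n := n) ⟨1, h3.symm⟩
    rcases S.sign (n + 2) with he | he <;> push_cast [← h3, he] at ht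
    · nlinarith [S.t_lt (n + 1)]
    · nlinarith [S.t_lt_half (n := n + 1) he]
  suffices t n * 3.6 < 1 by linarith [S.g_nonneg n]
  refine S.t_mul_lt_one ?_
  have h4' : (4 : ℝ) ≤ a (n + 1) := by exact_mod_cast h4
  rcases S.sign (n + 2) with he | he <;> push_cast [he]
  · linarith
  rcases (show 4 ≤ a (n + 1) from h4).eq_or_lt with h4 | h5
  · linarith [S.t_lt_of_three_le (S.three_le fun h2 => h ⟨h4.symm, he, h2⟩)]
  · have h5 : (5 : ℝ) ≤ a (n + 1) := by exact_mod_cast h5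
    linarith [S.t_lt_one (n + 1)]

theorem t_sub_extremalTail_eq (S : AdjustedSystem a e t u f g) (h4 : a (n + 1) = 4)
    (he : e (n + 2) = -1) (h2 : a (n + 2) = 2) :
    t n - extremalTail = -(t n * t (n + 1) * (3 / 2 * extremalTail ^ 2) *
      (t (n + 2) - (2 - 3 * extremalTail) / 3)) := by
  have h0 := S.t_mul n
  have h1 := S.t_mul (n + 1)
  push_cast [h4, he, h2, S.sign_succ_eq_one_of_two h2 he] at h0 h1
  have hsub : t n - extremalTail =
      t n * extremalTail * (t (n + 1) - 3 / 2 * extremalTail) := by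
    linear_combination extremalTail * h0 + t n / 2 * extremalTail_sq
  have hsub' : t (n + 1) - 3 / 2 * extremalTail =
      -(t (n + 1) * (3 / 2 * extremalTail) * (t (n + 2) - (2 - 3 * extremalTail) / 3)) := by
    linear_combination 3 / 2 * extremalTail * h1 + t (n + 1) / 2 * extremalTail_sq
  rw [hsub, hsub']
  ring

theorem t_gt_of_neg_four_neg_two (S : AdjustedSystem a e t u f g) (hen : e (n + 1) = -1)
    (hu : 0.36 ≤ u n) (h4 : a (n + 1) = 4) (he : e (n + 2) = -1) (h2 : a (n + 2) = 2) :
    0.3787 < t (n + 2) := by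
  have hc := S.u_mul_le (n + 1) h2 he
  have hu' := S.u_mul n
  push_cast [h4, hen] at hu'
  have hlow : 100 / 364 ≤ u (n + 1) := by nlinarith [S.u_succ_pos n]
  nlinarith [S.t_pos (n + 2)]

theorem t_sub_g_le_of_neg_four_neg_two_three (S : AdjustedSystem a e t u f g)
    (h4 : a (n + 1) = 4) (he : e (n + 2) = -1) (h2 : a (n + 2) = 2) (h3 : a (n + 3) = 3)
    (hlow : 0.3787 < t (n + 2)) (hlt : t (n + 2) < 0.3875) : t n - g n ≤ extremalTail := by
  have hξ := extremalTail_gt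
  have ht0 := S.t_mul n
  have ht1 := S.t_mul (n + 1)
  have ht2 := S.t_mul (n + 2)
  have hp0 := S.t_pos n
  have hp1 := S.t_pos (n + 1)
  have hp3 := S.t_pos (n + 3)
  push_cast [h4, he, h2, h3, S.sign_succ_eq_one_of_two h2 he] at ht0 ht1 ht2
  have he4 : e (n + 4) = -1 := (S.sign _).resolve_left fun hs => by
    push_cast [hs] at ht2
    nlinarith
  push_cast [he4] at ht2
  have ht3 : t (n + 3) ≤ 0.42 := by nlinarith
  have hg2 : 0.21 ≤ g (n + 2) := by
    rw [S.g_of_odd (n + 2) ⟨1, h3⟩]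
    nlinarith [S.g_le (n + 3)]
  have hl1 : 0.41 ≤ t (n + 1) := by nlinarith
  have hl0 : 0.25 ≤ t n := by nlinarith
  have hg1 : 0.086 ≤ g (n + 1) := by
    rw [S.g_of_even (n + 1) ⟨1, h2⟩]
    nlinarith
  have hg0 : 0.021 ≤ g n := by
    rw [S.g_of_even n ⟨2, h4⟩]
    nlinarith
  have : t (n + 1) ≤ 0.4205 := by nlinarith
  nlinarith

theorem digits_of_t_lt (S : AdjustedSystem a e t u f g) (hs : e (n + 1) = 1)
    (h2 : a (n + 1) = 2) (hlt : t n < 0.3875) :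
    e (n + 2) = 1 ∧ a (n + 2) = 2 ∧ e (n + 3) = -1 ∧ 3 ≤ a (n + 3) ∧ 0.36 ≤ u (n + 2) := by
  have ht := S.t_mul n
  have hp := S.t_pos n
  have hp' := S.t_pos (n + 1)
  push_cast [h2] at ht
  have he : e (n + 2) = 1 := (S.sign _).resolve_right fun h => by
    push_cast [h] at ht
    nlinarith
  push_cast [he] at ht
  obtain ⟨h2', he'⟩ := S.digits_of_half_le_t (n := n + 1) (by nlinarith)
  have hu := S.u_mul n
  have hu' := S.u_mul (n + 1)
  push_cast [h2, h2', hs, he] at hu hu'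
  have hhalf : u (n + 1) ≤ 1 / 2 := by nlinarith [S.u_nonneg n, S.u_succ_pos n]
  have hlt' : t (n + 2) < 1 / 3 := by nlinarith [S.t_mul_lt (n + 1) h2' he', S.u_nonneg (n + 1)]
  refine ⟨he, h2', he', S.three_le fun h => ?_, by nlinarith [S.u_succ_pos (n + 1)]⟩
  have ht2 := S.t_mul (n + 2)
  rcases S.sign (n + 4) with h6 | h6 <;> push_cast [h, h6] at ht2 <;>
    nlinarith [S.t_pos (n + 3), S.t_lt_one (n + 3), S.t_pos (n + 2)]

theorem t_sub_extremalTail_eq_of_period (S : AdjustedSystem a e t u f g) (h1 : a (n + 1) = 4)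
    (e2 : e (n + 2) = -1) (h2 : a (n + 2) = 2) (h3 : a (n + 3) = 2) (e4 : e (n + 4) = 1)
    (h4 : a (n + 4) = 2) (e5 : e (n + 5) = -1) :
    t n - extremalTail = t n * t (n + 1) * t (n + 2) * t (n + 3) *
      ((extremalTail * (2 - 3 * extremalTail) / 2) ^ 2 * (t (n + 4) - extremalTail)) := by
  have ht2 := S.t_mul (n + 2)
  have ht3 := S.t_mul (n + 3)
  push_cast [h3, e4, h4, e5] at ht2 ht3
  have hsub2 : t (n + 2) - (2 - 3 * extremalTail) / 3 =
      -(t (n + 2) * ((2 - 3 * extremalTail) / 3) * (t (n + 3) - (2 - 3 * extremalTail) / 2)) := by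
    linear_combination (2 - 3 * extremalTail) / 3 * ht2 - t (n + 2) / 2 * extremalTail_sq
  have hsub3 : t (n + 3) - (2 - 3 * extremalTail) / 2 =
      t (n + 3) * ((2 - 3 * extremalTail) / 2) * (t (n + 4) - extremalTail) := by
    linear_combination (2 - 3 * extremalTail) / 2 * ht3 - t (n + 3) / 2 * extremalTail_sq
  rw [S.t_sub_extremalTail_eq h1 e2 h2, hsub2, hsub3]
  ring

theorem t_sub_g_le_of_period (S : AdjustedSystem a e t u f g) (h1 : a (n + 1) = 4)
    (e2 : e (n + 2) = -1) (h2 : a (n + 2) = 2) (h3 : a (n + 3) = 2) (e4 : e (n + 4) = 1)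
    (h4 : a (n + 4) = 2) (e5 : e (n + 5) = -1) {δ : ℝ} (hδ : 0 ≤ δ)
    (ih : t (n + 4) - g (n + 4) ≤ extremalTail + δ) :
    t n - g n ≤ extremalTail + 1 / 10 * δ := by
  have hξ := extremalTail_gt
  have hξ' := extremalTail_lt
  have hsub := S.t_sub_extremalTail_eq_of_period h1 e2 h2 h3 e4 h4 e5
  have hg : g n = t n * t (n + 1) * t (n + 2) * t (n + 3) * g (n + 4) := by
    rw [S.g_of_even n ⟨2, h1⟩, S.g_of_even (n + 1) ⟨1, h2⟩, S.g_of_even (n + 2) ⟨1, h3⟩,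
      S.g_of_even (n + 3) ⟨1, h4⟩]
    ring
  set P := t n * t (n + 1) * t (n + 2) * t (n + 3)
  set Q := (extremalTail * (2 - 3 * extremalTail) / 2) ^ 2 with hQ
  have hP : 0 < P := mul_pos (mul_pos (mul_pos (S.t_pos _) (S.t_pos _)) (S.t_pos _)) (S.t_pos _)
  have hP1 : P ≤ 1 := by
    have h01 := mul_le_one₀ (S.t_lt_one n).le (S.t_pos (n + 1)).le (S.t_lt_one (n + 1)).le
    have h02 := mul_le_one₀ h01 (S.t_pos (n + 2)).le (S.t_lt_one (n + 2)).le
    exact mul_le_one₀ h02 (S.t_pos (n + 3)).le (S.t_lt_one (n + 3)).le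
  have hQ1 : Q ≤ 1 / 10 := by
    have hle : extremalTail * (2 - 3 * extremalTail) / 2 ≤ 0.3 := by nlinarith
    have hnn : 0 ≤ extremalTail * (2 - 3 * extremalTail) / 2 :=
      div_nonneg (mul_nonneg (by linarith) (by linarith)) two_pos.le
    nlinarith
  have hQ0 : 0 ≤ Q := sq_nonneg _
  calc t n - g n = extremalTail + P * (Q * (t (n + 4) - extremalTail) - g (n + 4)) := by
        rw [hg]
        linear_combination hsub
    _ ≤ extremalTail + P * (Q * δ) := by
        gcongr
        nlinarith [mul_le_mul_of_nonneg_left ih hQ0, S.g_nonneg (n + 4)]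
    _ ≤ extremalTail + 1 * (1 / 10 * δ) := by gcongr
    _ = extremalTail + 1 / 10 * δ := by ring

theorem t_sub_g_le_extremalTail (S : AdjustedSystem a e t u f g) (he : e (n + 1) = -1)
    (h3 : 3 ≤ a (n + 1)) (hu : 0.36 ≤ u n) : t n - g n ≤ extremalTail := by
  have hξ := extremalTail_gt
  have hξ' := extremalTail_lt
  refine forall_le_of_contraction (ι := {n // e (n + 1) = -1 ∧ 3 ≤ a (n + 1) ∧ 0.36 ≤ u n})
    (φ := fun n => t n - g n) (c := extremalTail) (C := 1) (q := 1 / 10) (by norm_num)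
    (by norm_num) zero_le_one (fun n => ?_) (fun δ hδ ih => ?_) ⟨n, he, h3, hu⟩
  · linarith [S.t_lt_one n, S.g_nonneg n]
  rintro ⟨n, he, h3, hu⟩
  suffices h : t n - g n ≤ extremalTail ∨ t n - g n ≤ extremalTail + 1 / 10 * δ from
    h.elim (fun h => h.trans (by linarith)) id
  by_cases hblock : a (n + 1) = 4 ∧ e (n + 2) = -1 ∧ a (n + 2) = 2
  swap
  · exact .inl (S.t_sub_g_le_of_not_four_neg_two h3 hblock)
  obtain ⟨h1, e2, h2⟩ := hblock
  by_cases hlt : t (n + 2) < (2 - 3 * extremalTail) / 3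
  swap
  · left
    have : 0 ≤ t n * t (n + 1) * (3 / 2 * extremalTail ^ 2) *
        (t (n + 2) - (2 - 3 * extremalTail) / 3) :=
      mul_nonneg (mul_nonneg (mul_pos (S.t_pos n) (S.t_pos _)).le (by positivity)) (by linarith)
    linarith [S.t_sub_extremalTail_eq h1 e2 h2, S.g_nonneg n]
  have hlow := S.t_gt_of_neg_four_neg_two he hu h1 e2 h2
  have h4 : ¬4 ≤ a (n + 2 + 1) := fun h => by linarith [S.t_lt_of_four_le h]
  rcases (S.two_le (n + 2)).eq_or_lt with ha | ha
  · obtain ⟨e4, h4, e5, h5, hu'⟩ :=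
      S.digits_of_t_lt (S.sign_succ_eq_one_of_two h2 e2) ha.symm (by linarith)
    exact .inr (S.t_sub_g_le_of_period h1 e2 h2 ha.symm e4 h4 e5 hδ (ih ⟨n + 4, e5, h5, hu'⟩))
  · exact .inl (S.t_sub_g_le_of_neg_four_neg_two_three h1 e2 h2
      (show a (n + 2 + 1) = 3 by omega) hlow (by linarith))

/-! ### The critical lattice point -/

theorem extremalValue_mul_le_at_extremalTail {u f : ℝ} (hnn : 0 ≤ 1 + u - 3 * f)
    (hup : 1.07 * (u - bronzeInv) ≤ 1 + u - 3 * f) :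
    extremalValue * (13 - 5 * u - extremalTail * (5 - 2 * u)) ≤
      (3 - u - f) * (1 - extremalTail) := by
  have hβ := bronzeInv_gt
  have hβ' := bronzeInv_lt
  have hξ := extremalTail_gt
  have hξ' := extremalTail_lt
  unfold extremalValue
  set d := 13 - 5 * bronzeInv - extremalTail * (5 - 2 * bronzeInv) with hd
  have hd0 : 10 ≤ d := by nlinarith [hd]
  rw [div_mul_eq_mul_div, div_le_iff₀ (by linarith)]
  have key : (u - bronzeInv) * (12 - 4 * extremalTail) ≤ (1 + u - 3 * f) * d := by
    rcases le_total bronzeInv u with h | h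
    · have hle : 12 - 4 * extremalTail ≤ 1.07 * d := by nlinarith
      linarith [mul_le_mul_of_nonneg_right hup (by linarith : 0 ≤ d),
        mul_le_mul_of_nonneg_left hle (sub_nonneg.2 h)]
    · exact (mul_nonpos_of_nonpos_of_nonneg (by linarith) (by linarith)).trans
        (mul_nonneg hnn (by linarith))
  have hlin : (8 - 4 * bronzeInv) * (13 - 5 * u - extremalTail * (5 - 2 * u)) ≤
      (8 - 4 * u + (1 + u - 3 * f)) * d := by linarith
  linarith [mul_le_mul_of_nonneg_right hlin (by linarith : 0 ≤ 1 - extremalTail)]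

/-- The numbers `α` and `g` stand for the forward tail and future sum after the digits
`-2, 2, -3`, and `u`, `f` for the reversed tail and past sum before them. -/
theorem extremalValue_mul_le {u f α g : ℝ} (hu0 : 0 ≤ u) (hu1 : u ≤ 1 / 2)
    (hnn : 0 ≤ 1 + u - 3 * f) (hup : 1.07 * (u - bronzeInv) ≤ 1 + u - 3 * f)
    (hα1 : α < 1) (hg : 0 ≤ g) (hαg : α - g ≤ extremalTail) :
    extremalValue * (13 - 5 * u - α * (5 - 2 * u)) ≤ (3 - u - f) * (1 - α + g) := by
  have hξ := extremalTail_gt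
  have hξ' := extremalTail_lt
  set x := extremalTail
  have hden : 0 < 13 - 5 * u - x * (5 - 2 * u) := by nlinarith
  have hcross : (1 - x) * (13 - 5 * u - α * (5 - 2 * u)) ≤
      (1 - α + g) * (13 - 5 * u - x * (5 - 2 * u)) := by
    have h1 : 0 ≤ (x - α + g) * (8 - 3 * u) := mul_nonneg (by linarith) (by linarith)
    have h2 : 0 ≤ g * ((5 - 2 * u) * (1 - x)) :=
      mul_nonneg hg (mul_nonneg (by linarith) (by linarith))
    linarith
  have h1 := mul_le_mul_of_nonneg_left hcross (by linarith : 0 ≤ 3 - u - f)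
  have h2 := mul_le_mul_of_nonneg_right (extremalValue_mul_le_at_extremalTail hnn hup)
    (by nlinarith : 0 ≤ 13 - 5 * u - α * (5 - 2 * u))
  refine le_of_mul_le_mul_right ?_ hden
  linarith

theorem extremalValue_mul_gap_le_of_neg_two_two_neg_three (S : AdjustedSystem a e t u f g)
    (h1 : a (n + 1) = 2) (e1 : e (n + 1) = -1) (h2 : a (n + 2) = 2) (h3 : a (n + 3) = 3)
    (e3 : e (n + 3) = -1) (e4 : e (n + 4) = -1) (h4 : 3 ≤ a (n + 4)) :
    extremalValue * (1 - t (n + 3) * u (n + 3)) ≤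
      (1 - u (n + 3) - f (n + 3)) * (1 - t (n + 3) + g (n + 3)) := by
  have e2 := S.sign_succ_eq_one_of_two h1 e1
  have hu0 := S.u_nonneg n
  have hu1 := S.u_le_half e1
  have hu2 : u (n + 1) = 1 / (2 - u n) :=
    (S.u_succ_eq_div one_ne_zero (div_one (u n)).symm).trans (by push_cast [h1, e1]; ring)
  have hu3 : u (n + 2) = (2 - u n) / (5 - 2 * u n) :=
    (S.u_succ_eq_div (by linarith) hu2).trans (by push_cast [h2, e2]; ring)
  have hu4 : u (n + 3) = (5 - 2 * u n) / (13 - 5 * u n) :=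
    (S.u_succ_eq_div (by linarith) hu3).trans (by push_cast [h3, e3]; ring)
  have hf : 1 - u (n + 3) - f (n + 3) = (3 - u n - f n) / (13 - 5 * u n) := by
    have hd1 : 2 - u n ≠ 0 := by linarith
    have hd2 : 5 - 2 * u n ≠ 0 := by linarith
    have hd3 : 13 - 5 * u n ≠ 0 := by linarith
    have hf1 := S.f_succ_of_even n ⟨1, h1⟩
    have hf2 := S.f_succ_of_even (n + 1) ⟨1, h2⟩
    have hf3 := S.f_succ_of_odd (n + 2) ⟨1, h3⟩
    push_cast [e1, e2, e3] at hf1 hf2 hf3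
    rw [hf3, hf2, hf1, hu4, hu3, hu2]
    field_simp
    ring
  have hlow : 0.36 ≤ u (n + 3) := by
    rw [hu4, le_div_iff₀ (by linarith)]
    linarith
  have hcore := extremalValue_mul_le hu0 hu1 (by linarith [(S.past_bounds n).2.1])
    (S.upper_ge_of_neg_two h1 e1) (S.t_lt_one (n + 3)) (S.g_nonneg (n + 3))
    (S.t_sub_g_le_extremalTail e4 h4 hlow)
  have hd : 0 < 13 - 5 * u n := by linarith
  rw [hf, hu4, div_mul_eq_mul_div, le_div_iff₀ hd]
  refine le_of_eq_of_le ?_ hcore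
  field_simp

theorem extremalValue_mul_le_mul {s t u g R : ℝ} (hs : s = 1 ∨ s = -1 ∧ t < 2 / 5) (ht : 0 < t)
    (hu : 0 ≤ u) (hu1 : u ≤ 1) (hg : 0 ≤ g) (hR : 0.265 - 0.106 * u ≤ R) :
    extremalValue * (1 + s * t * u) ≤ R * (1 + s * t + g) := by
  have hR0 : 0 ≤ R := by linarith
  have htu := mul_nonneg ht.le hu
  have htu1 : t * u ≤ t := mul_le_of_le_one_right ht.le hu1
  have hRg := mul_nonneg hR0 hg
  rcases hs with rfl | ⟨rfl, ht'⟩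
  · have hK := mul_le_mul_of_nonneg_right extremalValue_le (by linarith : 0 ≤ 1 + 1 * t * u)
    have hRt := mul_le_mul_of_nonneg_right (by linarith : 0.159 ≤ R) (by linarith : 0 ≤ 1 + t)
    linarith
  · have hK := mul_le_mul_of_nonneg_right extremalValue_le (by linarith : 0 ≤ 1 + -1 * t * u)
    have hRt := mul_le_mul_of_nonneg_right hR (by linarith : 0 ≤ 1 - t)
    have : 0 ≤ (1 - u) * (0.106 - 0.265 * t) := mul_nonneg (by linarith) (by linarith)
    linarith

theorem f_le_mul_u (S : AdjustedSystem a e t u f g) (n : ℕ) : f n ≤ 3 / 2 * u n := by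
  obtain _ | n := n
  · simp [S.u_zero, S.f_zero]
  obtain ⟨h1, h2⟩ := abs_le.1 (S.abs_sign_mul_f_le_half n)
  have hp := S.u_succ_pos n
  rcases Int.even_or_odd (a (n + 1)) with ha | ha
  · rw [S.f_succ_of_even n ha]
    nlinarith
  · rw [S.f_succ_of_odd n ha]
    nlinarith

theorem quarter_le_of_three_pos (S : AdjustedSystem a e t u f g) (h3 : a (n + 1) = 3)
    (he : e (n + 1) = 1) : 1 / 4 ≤ 1 - u (n + 1) - f (n + 1) := by
  have hu := S.u_mul n
  have hf := S.f_succ_of_odd n ⟨1, h3⟩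
  push_cast [h3, he] at hu hf
  have heq : 1 - u (n + 1) - f (n + 1) = u (n + 1) * (1 + u n - f n) := by
    linear_combination -hu - hf
  have hle : 1 / 4 * (3 + 1 * u n) ≤ 1 + u n - f n := by
    rcases le_total (u n) (1 / 4) with h | h <;>
      linarith [S.f_le_mul_u n, (S.past_bounds n).2.1]
  linarith [heq, mul_le_mul_of_nonneg_left hle (S.u_succ_pos n).le]

theorem le_one_sub_of_three_neg (S : AdjustedSystem a e t u f g) (h3 : a (n + 1) = 3)
    (he : e (n + 1) = -1) (h : n ≠ 0 → a n ≠ 2) :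
    0.265 - 0.106 * u (n + 1) ≤ 1 - u (n + 1) - f (n + 1) := by
  have hu := S.u_mul n
  have hf := S.f_succ_of_odd n ⟨1, h3⟩
  push_cast [h3, he] at hu hf
  have heq : 1 - u (n + 1) - f (n + 1) = u (n + 1) * (1 - u n + f n) := by
    linear_combination -hu - hf
  have key : 0.265 * (3 - u n) - 0.106 ≤ 1 - u n + f n := by
    have hlow := S.three_sevenths_le_lower h
    obtain _ | n := n
    · norm_num [S.u_zero, S.f_zero]
    have h3' := S.three_le (h n.succ_ne_zero)
    rcases Int.even_or_odd (a (n + 1)) with ha | ha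
    · linarith [S.u_succ_le_of_four_le (by grind : 4 ≤ a (n + 1))]
    · linarith [S.half_mul_u_le_f_of_odd ha, S.u_le (n + 1)]
  rw [heq]
  linarith [mul_le_mul_of_nonneg_left key (S.u_nonneg (n + 1))]

theorem le_one_sub_of_generic (S : AdjustedSystem a e t u f g)
    (h2 : a (n + 1) = 2 → e (n + 1) = 1)
    (h3 : a (n + 1) = 3 → e (n + 1) = -1 → n ≠ 0 → a n ≠ 2) :
    0.265 - 0.106 * u (n + 1) ≤ 1 - u (n + 1) - f (n + 1) := by
  have hu := S.u_mul n
  have hp := S.u_succ_pos n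
  rcases (S.two_le n).eq_or_lt with ha | ha
  · have he := h2 ha.symm
    have hf := S.f_succ_of_even n ⟨1, ha.symm⟩
    push_cast [← ha, he] at hu hf
    have heq : 1 - u (n + 1) - f (n + 1) = u (n + 1) * (1 + u n + f n) := by
      linear_combination -hu - hf
    have hle : 1 / 3 * (2 + 1 * u n) ≤ 1 + u n + f n := by
      linarith [(S.past_bounds n).1, S.u_nonneg n]
    linarith [heq, mul_le_mul_of_nonneg_left hle hp.le]
  rcases (show 3 ≤ a (n + 1) from ha).eq_or_lt with ha | ha
  · rcases S.sign (n + 1) with he | he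
    · push_cast [← ha, he] at hu
      have : 8 / 29 ≤ u (n + 1) := by nlinarith [S.u_le n]
      linarith [S.quarter_le_of_three_pos ha.symm he]
    · exact S.le_one_sub_of_three_neg ha.symm he (h3 ha.symm he)
  · linarith [S.u_succ_le_of_four_le ha, (S.past_bounds (n + 1)).2.1]

theorem le_one_sub_of_neg_two (S : AdjustedSystem a e t u f g) (h2 : a (n + 1) = 2)
    (he : e (n + 1) = -1) : 0.159 * (2 - 2 * u n + u n ^ 2) ≤ 1 - u n - f n := by
  obtain _ | n := n
  · norm_num [S.sign_one] at he
  have hp := S.u_succ_pos n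
  have hu := S.u_mul n
  have hne2 : a (n + 1) ≠ 2 := fun h =>
    S.not_two_neg_two n h (S.sign_eq_one_of_two h he) h2 he
  rcases (S.three_le hne2).eq_or_lt with h3 | h4
  · have hle := S.u_succ_le_of_three_le h3.le
    rcases S.sign (n + 1) with hs | hs <;> push_cast [← h3, hs] at hu
    · have : 8 / 29 ≤ u (n + 1) := by nlinarith [S.u_le n]
      nlinarith [S.quarter_le_of_three_pos h3.symm hs]
    · have : 1 / 3 ≤ u (n + 1) := by nlinarith [S.u_nonneg n]
      have := S.le_one_sub_of_three_neg h3.symm hs fun hn hk => by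
        obtain ⟨k, rfl⟩ := Nat.exists_eq_succ_of_ne_zero hn
        exact S.not_two_neg_three_neg_two k hk (S.sign_eq_one_of_two hk hs) h3.symm hs h2 he
      nlinarith
  · nlinarith [S.u_succ_le_of_four_le h4, (S.past_bounds (n + 1)).2.1]

theorem extremalValue_mul_gap_le_of_neg_two (S : AdjustedSystem a e t u f g)
    (h2 : a (n + 1) = 2) (he : e (n + 1) = -1) :
    extremalValue * (1 + e (n + 2) * t (n + 1) * u (n + 1)) ≤
      (1 - u (n + 1) - f (n + 1)) * (1 + e (n + 2) * t (n + 1) + g (n + 1)) := by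
  have hu := S.u_mul n
  have hf := S.f_succ_of_even n ⟨1, h2⟩
  push_cast [h2, he] at hu hf
  have heq : 1 - u (n + 1) - f (n + 1) = u (n + 1) * (1 - u n - f n) := by
    linear_combination -hu - hf
  have hp := S.u_succ_pos n
  have ht := S.t_pos (n + 1)
  have hm := S.le_one_sub_of_neg_two h2 he
  have hm0 : 0 ≤ 1 - u n - f n := by nlinarith
  push_cast [heq, S.sign_succ_eq_one_of_two h2 he]
  have hK := mul_le_mul_of_nonneg_right extremalValue_le
    (by have := mul_pos ht hp; linarith : 0 ≤ 1 + 1 * t (n + 1) * u (n + 1))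
  have hcond : 0 ≤ (1 - u n) * (t (n + 1) * (1 - u n) - u n) :=
    mul_nonneg (by linarith [S.u_lt_one n]) (by linarith [S.u_mul_le n h2 he])
  have hmul : 0.159 * (2 - u n + t (n + 1)) ≤ (1 - u n - f n) * (1 + t (n + 1)) := by
    linarith [mul_le_mul_of_nonneg_right hm (by linarith : 0 ≤ 1 + t (n + 1))]
  linarith [mul_le_mul_of_nonneg_left hmul hp.le,
    mul_nonneg (mul_nonneg hp.le hm0) (S.g_nonneg (n + 1))]

theorem one_sub_eq_of_two_neg_three (S : AdjustedSystem a e t u f g) (h2 : a (n + 1) = 2)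
    (h3 : a (n + 2) = 3) (he : e (n + 2) = -1) :
    1 - u (n + 2) - f (n + 2) = (1 + u n - f n) / (5 + 3 * u n) := by
  have hu := S.u_mul n
  have hu0 := S.u_nonneg n
  have hf1 := S.f_succ_of_even n ⟨1, h2⟩
  have hf2 := S.f_succ_of_odd (n + 1) ⟨1, h3⟩
  have hs := S.sign_eq_one_of_two h2 he
  push_cast [h2, hs, he] at hf1 hf2 hu
  rw [hf2, hf1, S.u_eq_of_two_neg_three h2 h3 he,
    eq_one_div_of_mul_eq_one_left hu]
  field_simp
  ring

theorem extremalValue_mul_gap_le_of_two_neg_three_pos (S : AdjustedSystem a e t u f g)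
    (h2 : a (n + 1) = 2) (h3 : a (n + 2) = 3) (he : e (n + 2) = -1) (he' : e (n + 3) = 1) :
    extremalValue * (1 + t (n + 2) * u (n + 2)) ≤
      (1 - u (n + 2) - f (n + 2)) * (1 + t (n + 2) + g (n + 2)) := by
  have ht := S.t_pos (n + 2)
  have hu0 := S.u_nonneg n
  have hu := S.u_eq_of_two_neg_three h2 h3 he
  have hR := S.one_sub_eq_of_two_neg_three h2 h3 he
  have htu := mul_pos ht (S.u_succ_pos (n + 1))
  have hK := mul_le_mul_of_nonneg_right extremalValue_le
    (by linarith : 0 ≤ 1 + t (n + 2) * u (n + 2))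
  by_cases h : n ≠ 0 ∧ a n = 2
  · obtain ⟨hn, ha⟩ := h
    obtain ⟨k, rfl⟩ := Nat.exists_eq_succ_of_ne_zero hn
    have hR1 : 0.159 ≤ 1 - u (k + 1 + 2) - f (k + 1 + 2) := by
      rw [hR, le_div_iff₀ (by linarith)]
      linarith [S.half_le_upper_of_two ha]
    nlinarith [S.g_nonneg (k + 1 + 2), S.u_lt_one (k + 1 + 2)]
  · have hle : u n ≤ 2 / 5 := by
      obtain _ | k := n
      · norm_num [S.u_zero]
      · exact S.u_succ_le_of_three_le (S.three_le (by simpa using h))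
    have hlt := S.one_lt_u_mul_of_two_neg_three h2 h3 he
    push_cast [he'] at hlt
    have hhalf : 1 / 2 ≤ t (n + 2) := by nlinarith
    have hR1 : 2 / 15 ≤ 1 - u (n + 2) - f (n + 2) := by
      rw [hR, le_div_iff₀ (by linarith)]
      linarith [(S.past_bounds n).2.1]
    have hu2 : u (n + 2) ≤ 2 / 5 := S.u_succ_le_of_three_le h3.ge
    nlinarith [S.g_nonneg (n + 2)]

/-- The estimate at the lattice point `(1, -1)`. -/
theorem extremalValue_mul_gap_le (S : AdjustedSystem a e t u f g)
    (h : e (n + 1) = 1 ∨ 3 ≤ a (n + 1)) :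
    extremalValue * (1 + e (n + 1) * t n * u n) ≤
      (1 - u n - f n) * (1 + e (n + 1) * t n + g n) := by
  have hsign : (e (n + 1) : ℝ) = 1 ∨ (e (n + 1) : ℝ) = -1 ∧ t n < 2 / 5 := by
    rcases S.sign (n + 1) with hs | hs
    · exact .inl (by simp [hs])
    · exact .inr ⟨by simp [hs], S.t_lt_of_three_le (h.resolve_left (by simp [hs]))⟩
  have easy := extremalValue_mul_le_mul (R := 1 - u n - f n) hsign (S.t_pos n) (S.u_nonneg n)
    (S.u_lt_one n).le (S.g_nonneg n)
  obtain _ | n := n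
  · exact easy (by norm_num [S.u_zero, S.f_zero])
  by_cases h2 : a (n + 1) = 2 ∧ e (n + 1) = -1
  · exact S.extremalValue_mul_gap_le_of_neg_two h2.1 h2.2
  by_cases h3 : a (n + 1) = 3 ∧ e (n + 1) = -1 ∧ n ≠ 0 ∧ a n = 2
  · obtain ⟨h3, he, hn, h2⟩ := h3
    obtain ⟨k, rfl⟩ := Nat.exists_eq_succ_of_ne_zero hn
    rcases S.sign (k + 3) with he' | he'
    · simpa [he'] using S.extremalValue_mul_gap_le_of_two_neg_three_pos h2 h3 he he'
    · obtain ⟨hk, h1, e1⟩ := S.digits_of_two_neg_three_neg h2 h3 he he'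
      obtain ⟨k, rfl⟩ := Nat.exists_eq_succ_of_ne_zero hk
      have ha := h.resolve_left (by simp [he'])
      simpa [he', sub_eq_add_neg] using
        S.extremalValue_mul_gap_le_of_neg_two_two_neg_three h1 e1 h2 h3 he he' ha
  · exact easy (S.le_one_sub_of_generic (fun ha => (S.sign _).resolve_right (h2 ⟨ha, ·⟩))
      fun ha he hn hk => h3 ⟨ha, he, hn, hk⟩)

/-! ### Products of linear forms at odd lattice points -/

/-- The reversed linear form at the `n`-th stage; it measures the size of the multiplier of `α`. -/
def pastForm (u f : ℕ → ℝ) (n : ℕ) (p : ℤ × ℤ) : ℝ := p.2 + p.1 * u n + f n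

/-- The forward linear form at the `n`-th stage; it measures the approximation error. -/
def futureForm (e : ℕ → ℤ) (t g : ℕ → ℝ) (n : ℕ) (p : ℤ × ℤ) : ℝ :=
  p.1 - e (n + 1) * t n * p.2 + g n

/-- The determinant of the two linear forms at the `n`-th stage. -/
def gap (e : ℕ → ℤ) (t u : ℕ → ℝ) (n : ℕ) : ℝ := 1 + e (n + 1) * t n * u n

/-- The absolute value of the product of the two linear forms, normalised by their determinant:
the quantity that does not change along the expansion, see `normProd_digitStep`. -/
noncomputable def normProd (e : ℕ → ℤ) (t u f g : ℕ → ℝ) (n : ℕ) (p : ℤ × ℤ) : ℝ :=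
  |pastForm u f n p * futureForm e t g n p| / gap e t u n

/-- The change of coordinates from stage `n` to stage `n + 1`. The shift by `-1` at odd digits
keeps both coordinates odd. -/
noncomputable def digitStep (a e : ℕ → ℤ) (n : ℕ) (p : ℤ × ℤ) : ℤ × ℤ :=
  if Even (a (n + 1)) then (a (n + 1) * p.1 - e (n + 1) * p.2, -p.1)
  else (-(a (n + 1) * p.1 - e (n + 1) * p.2) - 1, p.1)

theorem gap_mem_Icc (S : AdjustedSystem a e t u f g) (n : ℕ) :
    gap e t u n ∈ Set.Icc (7 / 12 : ℝ) (17 / 12) := by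
  have htu : t n * u n ≤ 2 / 3 * (5 / 8) :=
    mul_le_mul (S.t_lt n).le (S.u_le n) (S.u_nonneg n) (by norm_num)
  have htu0 := mul_nonneg (S.t_pos n).le (S.u_nonneg n)
  unfold gap
  rcases S.sign (n + 1) with he | he <;> push_cast [he] <;> constructor <;> linarith

theorem gap_pos (S : AdjustedSystem a e t u f g) (n : ℕ) : 0 < gap e t u n :=
  (by norm_num : (0 : ℝ) < 7 / 12).trans_le (S.gap_mem_Icc n).1

theorem t_mul_gap_succ (S : AdjustedSystem a e t u f g) (n : ℕ) :
    t n * gap e t u (n + 1) = u (n + 1) * gap e t u n := by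
  unfold gap
  linear_combination u (n + 1) * S.t_mul n - t n * S.u_mul n

theorem digitStep_of_even (h : Even (a (n + 1))) (p : ℤ × ℤ) :
    digitStep a e n p = (a (n + 1) * p.1 - e (n + 1) * p.2, -p.1) := if_pos h

theorem digitStep_of_odd (h : Odd (a (n + 1))) (p : ℤ × ℤ) :
    digitStep a e n p = (-(a (n + 1) * p.1 - e (n + 1) * p.2) - 1, p.1) :=
  if_neg (Int.not_even_iff_odd.2 h)

theorem abs_pastForm_digitStep (S : AdjustedSystem a e t u f g) (n : ℕ) (p : ℤ × ℤ) :
    |pastForm u f (n + 1) (digitStep a e n p)| = u (n + 1) * |pastForm u f n p| := by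
  suffices |pastForm u f (n + 1) (digitStep a e n p)| = |u (n + 1) * pastForm u f n p| by
    rwa [abs_mul, abs_of_pos (S.u_succ_pos n)] at this
  rw [abs_eq_abs]
  have hu := S.u_mul n
  unfold pastForm
  rcases Int.even_or_odd (a (n + 1)) with ha | ha
  · rw [digitStep_of_even ha, S.f_succ_of_even n ha]
    rcases S.sign (n + 1) with he | he <;> push_cast [he] at hu ⊢
    · exact .inr (by linear_combination p.1 * hu)
    · exact .inl (by linear_combination p.1 * hu)
  · rw [digitStep_of_odd ha, S.f_succ_of_odd n ha]
    rcases S.sign (n + 1) with he | he <;> push_cast [he] at hu ⊢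
    · exact .inl (by linear_combination -p.1 * hu)
    · exact .inr (by linear_combination -p.1 * hu)

theorem t_mul_abs_futureForm_digitStep (S : AdjustedSystem a e t u f g) (n : ℕ) (p : ℤ × ℤ) :
    t n * |futureForm e t g (n + 1) (digitStep a e n p)| = |futureForm e t g n p| := by
  suffices |t n * futureForm e t g (n + 1) (digitStep a e n p)| = |futureForm e t g n p| by
    rwa [abs_mul, abs_of_pos (S.t_pos n)] at this
  rw [abs_eq_abs]
  have ht := S.t_mul n
  unfold futureForm
  rcases Int.even_or_odd (a (n + 1)) with ha | ha
  · rw [digitStep_of_even ha, S.g_of_even n ha]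
    push_cast
    exact .inl (by linear_combination p.1 * ht)
  · rw [digitStep_of_odd ha, S.g_of_odd n ha]
    push_cast
    exact .inr (by linear_combination -p.1 * ht)

theorem normProd_digitStep (S : AdjustedSystem a e t u f g) (n : ℕ) (p : ℤ × ℤ) :
    normProd e t u f g (n + 1) (digitStep a e n p) = normProd e t u f g n p := by
  unfold normProd
  rw [div_eq_div_iff (S.gap_pos _).ne' (S.gap_pos _).ne', abs_mul, abs_mul,
    S.abs_pastForm_digitStep n p, ← S.t_mul_abs_futureForm_digitStep n p]
  linear_combination -|pastForm u f n p| * |futureForm e t g (n + 1) (digitStep a e n p)| *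
    S.t_mul_gap_succ n

theorem le_normProd (S : AdjustedSystem a e t u f g) {M x y : ℝ} {p : ℤ × ℤ}
    (h : M * gap e t u n ≤ x * y) (hxy : |x * y| = |pastForm u f n p * futureForm e t g n p|) :
    M ≤ normProd e t u f g n p :=
  (le_div_iff₀ (S.gap_pos n)).2 (h.trans ((le_abs_self _).trans_eq hxy))

theorem extremalValue_mul_gap_le_of_ge (S : AdjustedSystem a e t u f g) (n : ℕ) {M : ℝ}
    (hM : 0.226 ≤ M) : extremalValue * gap e t u n ≤ M := by
  linarith [mul_le_mul_of_nonneg_right extremalValue_le (S.gap_pos n).le, (S.gap_mem_Icc n).2]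

theorem extremalValue_le_normProd_one_neg_one (S : AdjustedSystem a e t u f g) (n : ℕ) :
    extremalValue ≤ normProd e t u f g n (1, -1) := by
  have key : ∀ n, e (n + 1) = 1 ∨ 3 ≤ a (n + 1) →
      extremalValue ≤ normProd e t u f g n (1, -1) := fun n h =>
    S.le_normProd (S.extremalValue_mul_gap_le h) <| by
      rw [← abs_neg]
      unfold pastForm futureForm
      push_cast
      ring_nf
  by_cases h : e (n + 1) = 1 ∨ 3 ≤ a (n + 1)
  · exact key n h
  obtain ⟨he, h3⟩ := not_or.1 h
  have h2 : a (n + 1) = 2 := by_contra fun h2 => h3 (S.three_le h2)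
  have he := (S.sign _).resolve_left he
  rw [← S.normProd_digitStep, digitStep_of_even ⟨1, h2⟩]
  simpa [h2, he] using key (n + 1) (.inl (S.sign_succ_eq_one_of_two h2 he))

theorem extremalValue_le_normProd_neg_one_one (S : AdjustedSystem a e t u f g) (n : ℕ) :
    extremalValue ≤ normProd e t u f g n (-1, 1) := by
  have key : ∀ n, extremalValue * gap e t u n ≤
      (1 - u n + f n) * (1 + e (n + 1) * t n - g n) →
      extremalValue ≤ normProd e t u f g n (-1, 1) := fun n h => S.le_normProd h <| by
    rw [← abs_neg]
    unfold pastForm futureForm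
    push_cast
    ring_nf
  have hpos : ∀ n, e (n + 1) = 1 → extremalValue ≤ normProd e t u f g n (-1, 1) := by
    refine fun n he => key n (S.extremalValue_mul_gap_le_of_ge n ?_)
    have h1 : 1 / 4 ≤ 1 - u n + f n := by linarith [(S.past_bounds n).1, S.u_le n]
    have h2 : 1 ≤ 1 + e (n + 1) * t n - g n := by push_cast [he]; linarith [S.g_le n]
    nlinarith
  rcases S.sign (n + 1) with he | he
  · exact hpos n he
  by_cases h2 : a (n + 1) = 2
  · rw [← S.normProd_digitStep, digitStep_of_even ⟨1, h2⟩]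
    simpa [h2, he] using hpos (n + 1) (S.sign_succ_eq_one_of_two h2 he)
  rcases (S.three_le h2).eq_or_lt with h3 | h4
  · rw [← S.normProd_digitStep, digitStep_of_odd ⟨1, h3.symm⟩]
    simpa [← h3, he] using S.extremalValue_le_normProd_one_neg_one (n + 1)
  refine key n ?_
  have ht := S.t_lt_of_four_le h4
  have hu := S.u_le_half he
  have hK := mul_le_mul_of_nonneg_right extremalValue_le (S.gap_pos n).le
  unfold gap at hK ⊢
  push_cast [he] at hK ⊢
  have h1 : 2 / 3 * (1 - u n) ≤ 1 - u n + f n := by linarith [(S.past_bounds n).1]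
  have h2 : 1 - 2 * t n ≤ 1 + -1 * t n - g n := by linarith [S.g_le n]
  nlinarith [mul_le_mul h1 h2 (by linarith) (by linarith), S.u_nonneg n, S.t_pos n]

theorem extremalValue_le_normProd_neg_one_neg_one (S : AdjustedSystem a e t u f g) (n : ℕ) :
    extremalValue ≤ normProd e t u f g n (-1, -1) := by
  have hf : 2 / 3 ≤ 1 + u n - f n := by linarith [(S.past_bounds n).2.1, S.u_nonneg n]
  have key (h : 3 / 7 ≤ 1 - e (n + 1) * t n - g n) :
      extremalValue ≤ normProd e t u f g n (-1, -1) :=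
    S.le_normProd (x := 1 + u n - f n) (y := 1 - e (n + 1) * t n - g n)
      (S.extremalValue_mul_gap_le_of_ge n (by nlinarith)) <| by
        unfold pastForm futureForm
        push_cast
        ring_nf
  rcases S.sign (n + 1) with he | he
  · by_cases h2 : a (n + 1) = 2
    · rw [← S.normProd_digitStep, digitStep_of_even ⟨1, h2⟩]
      simpa [h2, he] using S.extremalValue_le_normProd_neg_one_one (n + 1)
    rcases (S.three_le h2).eq_or_lt with h3 | h4
    · rw [← S.normProd_digitStep, digitStep_of_odd ⟨1, h3.symm⟩]
      simpa [← h3, he] using S.extremalValue_le_normProd_one_neg_one (n + 1)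
    · exact key (by push_cast [he]; linarith [S.t_lt_of_four_le h4, S.g_le n])
  · exact key (by push_cast [he]; linarith [S.g_le n])

theorem extremalValue_le_normProd_one_one (S : AdjustedSystem a e t u f g) (n : ℕ) :
    extremalValue ≤ normProd e t u f g n (1, 1) := by
  have hf : 2 / 3 ≤ 1 + u n + f n := by linarith [(S.past_bounds n).1, S.u_nonneg n]
  have key (h : 3 / 5 ≤ 1 - e (n + 1) * t n + g n) :
      extremalValue ≤ normProd e t u f g n (1, 1) :=
    S.le_normProd (x := 1 + u n + f n) (y := 1 - e (n + 1) * t n + g n)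
      (S.extremalValue_mul_gap_le_of_ge n (by nlinarith)) <| by
        unfold pastForm futureForm
        push_cast
        ring_nf
  have hg := S.g_nonneg n
  rcases S.sign (n + 1) with he | he
  · by_cases h2 : a (n + 1) = 2
    · rw [← S.normProd_digitStep, digitStep_of_even ⟨1, h2⟩]
      simpa [h2, he] using S.extremalValue_le_normProd_one_neg_one (n + 1)
    · exact key (by push_cast [he]; linarith [S.t_lt_of_three_le (S.three_le h2)])
  · exact key (by push_cast [he]; linarith [S.t_pos n])

theorem extremalValue_le_normProd_of_units (S : AdjustedSystem a e t u f g) (n : ℕ) {x y : ℤ}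
    (hx : x = 1 ∨ x = -1) (hy : y = 1 ∨ y = -1) : extremalValue ≤ normProd e t u f g n (x, y) := by
  rcases hx with rfl | rfl <;> rcases hy with rfl | rfl
  · exact S.extremalValue_le_normProd_one_one n
  · exact S.extremalValue_le_normProd_one_neg_one n
  · exact S.extremalValue_le_normProd_neg_one_one n
  · exact S.extremalValue_le_normProd_neg_one_neg_one n

theorem le_abs_mul_of_mem_Icc {M c b t k z : ℝ} (hc : |c| ≤ 1) (ht : 0 < t) (hz : 1 ≤ z)
    (hzk : z ≤ k) (hb : t * k ≤ b) (h1 : M ≤ |(1 + c) * (b - t * 1)|)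
    (hk : M ≤ |(k + c) * (b - t * k)|) : M ≤ |(z + c) * (b - t * z)| := by
  have hc0 := (abs_le.1 hc).1
  have hzk' : t * z ≤ t * k := mul_le_mul_of_nonneg_left hzk ht.le
  have hz' : t * 1 ≤ t * z := mul_le_mul_of_nonneg_left hz ht.le
  rw [abs_of_nonneg (mul_nonneg (by linarith) (by linarith))] at h1 hk ⊢
  rcases hz.eq_or_lt with rfl | hz
  · exact h1
  -- The product is a concave function of `z`.
  have hconcave : (k - z) * ((1 + c) * (b - t * 1)) + (z - 1) * ((k + c) * (b - t * k)) ≤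
      (k - 1) * ((z + c) * (b - t * z)) := by
    have : 0 ≤ t * ((z - 1) * (k - z) * (k - 1)) := by
      apply mul_nonneg ht.le (mul_nonneg (mul_nonneg _ _) _) <;> linarith
    linarith
  refine le_of_mul_le_mul_left ?_ (by linarith : 0 < k - 1)
  linarith [mul_le_mul_of_nonneg_left h1 (by linarith : 0 ≤ k - z),
    mul_le_mul_of_nonneg_left hk (by linarith : 0 ≤ z - 1)]

theorem le_abs_mul_of_odd {M c b t : ℝ} {k z : ℤ} (hc : |c| ≤ 1) (ht : 0 < t) (hz : Odd z)
    (hk : Odd k) (hk1 : 1 ≤ k) (hb1 : t * k ≤ b) (hb2 : b ≤ t * (k + 2))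
    (h1 : M ≤ |(1 + c) * (b - t * 1)|) (h2 : M ≤ |(-1 + c) * (b - t * (-1))|)
    (h3 : M ≤ |(k + c) * (b - t * k)|) (h4 : M ≤ |(k + 2 + c) * (b - t * (k + 2))|) :
    M ≤ |(z + c) * (b - t * z)| := by
  obtain ⟨hc0, hc1⟩ := abs_le.1 hc
  have hk1' : (1 : ℝ) ≤ k := by exact_mod_cast hk1
  have htk : t * 1 ≤ t * k := mul_le_mul_of_nonneg_left hk1' ht.le
  obtain h | ⟨h, h'⟩ | h : z ≤ -1 ∨ (1 ≤ z ∧ z ≤ k) ∨ k + 2 ≤ z := by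
    obtain ⟨p, rfl⟩ := hz
    obtain ⟨q, rfl⟩ := hk
    omega
  · have h : (z : ℝ) ≤ -1 := by exact_mod_cast h
    have htz : t * z ≤ t * (-1) := mul_le_mul_of_nonneg_left h ht.le
    refine h2.trans ?_
    rw [abs_mul, abs_mul]
    exact mul_le_mul (abs_le_abs_of_nonpos (by linarith) (by linarith))
      (abs_le_abs_of_nonneg (by linarith) (by linarith)) (abs_nonneg _) (abs_nonneg _)
  · exact le_abs_mul_of_mem_Icc hc ht (by exact_mod_cast h) (by exact_mod_cast h') hb1 h1 h3
  · have h : (k : ℝ) + 2 ≤ z := by exact_mod_cast h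
    have htz : t * (k + 2) ≤ t * z := mul_le_mul_of_nonneg_left h ht.le
    refine h4.trans ?_
    rw [abs_mul, abs_mul]
    exact mul_le_mul (abs_le_abs_of_nonneg (by linarith) (by linarith))
      (abs_le_abs_of_nonpos (by linarith) (by linarith)) (abs_nonneg _) (abs_nonneg _)

theorem abs_pastForm_mul_futureForm (S : AdjustedSystem a e t u f g) (n : ℕ) {x : ℤ}
    (hx : x = 1 ∨ x = -1) (z : ℤ) :
    |pastForm u f n (x, e (n + 1) * x * z) * futureForm e t g n (x, e (n + 1) * x * z)| =
      |(z + e (n + 1) * x * (x * u n + f n)) * (1 + x * g n - t n * z)| := by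
  unfold pastForm futureForm
  rw [abs_eq_abs]
  rcases S.sign (n + 1) with he | he <;> rcases hx with rfl | rfl <;> push_cast [he]
  · exact .inl (by ring)
  · exact .inl (by ring)
  · exact .inr (by ring)
  · exact .inr (by ring)

theorem abs_sign_mul_mul_le_one (S : AdjustedSystem a e t u f g) (n : ℕ) {x : ℤ}
    (hx : x = 1 ∨ x = -1) : |(e (n + 1) * x * (x * u n + f n) : ℝ)| ≤ 1 := by
  obtain ⟨-, -, h3, h4⟩ := S.past_bounds n
  have := S.u_nonneg n
  rw [abs_le]
  rcases S.sign (n + 1) with he | he <;> rcases hx with rfl | rfl <;> push_cast [he] <;>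
    constructor <;> linarith

theorem abs_sign_mul_t_add_le_one (S : AdjustedSystem a e t u f g) (n : ℕ) {x : ℤ}
    (hx : x = 1 ∨ x = -1) : |(e (n + 1) * t n + x * g n : ℝ)| ≤ 1 := by
  have h := S.t_add_g_le_one n
  have := S.t_pos n
  have := S.g_nonneg n
  rw [abs_le]
  rcases S.sign (n + 1) with he | he <;> rcases hx with rfl | rfl <;> push_cast [he] <;>
    constructor <;> linarith

theorem sign_mul_eq_unit (S : AdjustedSystem a e t u f g) (n : ℕ) {x : ℤ}
    (hx : x = 1 ∨ x = -1) : e n * x = 1 ∨ e n * x = -1 := by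
  rcases S.sign n with he | he <;> rcases hx with rfl | rfl <;> simp [he]

theorem extremalValue_le_normProd_of_vertices (S : AdjustedSystem a e t u f g) {x k z : ℤ}
    (hx : x = 1 ∨ x = -1) (hz : Odd z) (hk : Odd k) (hk1 : 1 ≤ k)
    (hb1 : t n * k ≤ 1 + x * g n) (hb2 : 1 + x * g n ≤ t n * (k + 2))
    (h3 : extremalValue ≤ normProd e t u f g n (x, e (n + 1) * x * k))
    (h4 : extremalValue ≤ normProd e t u f g n (x, e (n + 1) * x * (k + 2))) :
    extremalValue ≤ normProd e t u f g n (x, e (n + 1) * x * z) := by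
  have h1 : extremalValue ≤ normProd e t u f g n (x, e (n + 1) * x * 1) :=
    S.extremalValue_le_normProd_of_units n hx (by simpa using S.sign_mul_eq_unit _ hx)
  have h2 : extremalValue ≤ normProd e t u f g n (x, e (n + 1) * x * (-1)) :=
    S.extremalValue_le_normProd_of_units n hx
      (by simpa [neg_eq_iff_eq_neg, or_comm] using S.sign_mul_eq_unit (n + 1) hx)
  unfold normProd at h1 h2 h3 h4 ⊢
  rw [S.abs_pastForm_mul_futureForm n hx, le_div_iff₀ (S.gap_pos n)] at h1 h2 h3 h4 ⊢
  push_cast at h1 h2 h4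
  exact le_abs_mul_of_odd (S.abs_sign_mul_mul_le_one n hx) (S.t_pos n) hz hk hk1 hb1 hb2 h1 h2 h3 h4

theorem extremalValue_le_normProd_of_even (S : AdjustedSystem a e t u f g)
    (ha : Even (a (n + 1))) {x z : ℤ} (hx : x = 1 ∨ x = -1) (hz : Odd z) :
    extremalValue ≤ normProd e t u f g n (x, e (n + 1) * x * z) := by
  have hnx : -x = 1 ∨ -x = -1 := by omega
  have hee : e (n + 1) * e (n + 1) = 1 := by rcases S.sign (n + 1) with he | he <;> simp [he]
  have ht := S.t_mul n
  have hg := S.g_of_even n ha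
  have habs : |(e (n + 2) * t (n + 1) + x * g (n + 1) : ℝ)| ≤ 1 := by
    exact_mod_cast S.abs_sign_mul_t_add_le_one (n + 1) hx
  obtain ⟨h1, h2⟩ := abs_le.1 habs
  refine S.extremalValue_le_normProd_of_vertices (k := a (n + 1) - 1) hx hz (ha.sub_odd odd_one)
    (by linarith [S.two_le n]) ?_ ?_ ?_ ?_
  · push_cast [hg]
    linarith [mul_le_mul_of_nonneg_left h1 (S.t_pos n).le]
  · push_cast [hg]
    linarith [mul_le_mul_of_nonneg_left h2 (S.t_pos n).le]
  · rw [← S.normProd_digitStep, digitStep_of_even ha]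
    refine S.extremalValue_le_normProd_of_units _ ?_ hnx
    convert hx using 2 <;> linear_combination (x - x * a (n + 1)) * hee
  · rw [← S.normProd_digitStep, digitStep_of_even ha]
    refine S.extremalValue_le_normProd_of_units _ ?_ hnx
    convert hnx using 2 <;> linear_combination (-x - x * a (n + 1)) * hee

theorem extremalValue_le_normProd_of_odd (S : AdjustedSystem a e t u f g)
    (ha : Odd (a (n + 1))) {x z : ℤ} (hx : x = 1 ∨ x = -1) (hz : Odd z) :
    extremalValue ≤ normProd e t u f g n (x, e (n + 1) * x * z) := by
  have hnx : -x = 1 ∨ -x = -1 := by omega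
  have hxx : x * x = 1 := by rcases hx with rfl | rfl <;> norm_num
  have hee : e (n + 1) * e (n + 1) = 1 := by rcases S.sign (n + 1) with he | he <;> simp [he]
  have ha3 : 3 ≤ a (n + 1) := S.three_le fun h2 => absurd (h2 ▸ ha) (by decide)
  have ht := S.t_mul n
  have hg := S.g_of_odd n ha
  have habs : |(e (n + 2) * t (n + 1) + -x * g (n + 1) : ℝ)| ≤ 1 := by
    exact_mod_cast S.abs_sign_mul_t_add_le_one (n + 1) hnx
  obtain ⟨h1, h2⟩ := abs_le.1 habs
  refine S.extremalValue_le_normProd_of_vertices (k := a (n + 1) - 1 + x) hx hz ?_ (by omega)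
    ?_ ?_ ?_ ?_
  · exact (ha.sub_odd odd_one).add_odd (by rcases hx with rfl | rfl <;> decide)
  · push_cast [hg]
    linarith [mul_le_mul_of_nonneg_left h1 (S.t_pos n).le]
  · push_cast [hg]
    linarith [mul_le_mul_of_nonneg_left h2 (S.t_pos n).le]
  · rw [← S.normProd_digitStep, digitStep_of_odd ha]
    refine S.extremalValue_le_normProd_of_units _ ?_ hx
    convert hnx using 2 <;> linear_combination (x * (a (n + 1) - 1 + x)) * hee + hxx
  · rw [← S.normProd_digitStep, digitStep_of_odd ha]
    refine S.extremalValue_le_normProd_of_units _ ?_ hx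
    convert hx using 2 <;> linear_combination (x * (a (n + 1) + 1 + x)) * hee + hxx

theorem extremalValue_le_normProd_of_fst_unit (S : AdjustedSystem a e t u f g) (n : ℕ) {x y : ℤ}
    (hx : x = 1 ∨ x = -1) (hy : Odd y) : extremalValue ≤ normProd e t u f g n (x, y) := by
  obtain ⟨z, hz, rfl⟩ : ∃ z, Odd z ∧ y = e (n + 1) * x * z := by
    rcases S.sign_mul_eq_unit (n + 1) hx with h | h
    · exact ⟨y, hy, by rw [h, one_mul]⟩
    · exact ⟨-y, hy.neg, by rw [h, neg_one_mul, neg_neg]⟩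
  rcases Int.even_or_odd (a (n + 1)) with ha | ha
  · exact S.extremalValue_le_normProd_of_even ha hx hz
  · exact S.extremalValue_le_normProd_of_odd ha hx hz

theorem abs_digitStep_snd (n : ℕ) (p : ℤ × ℤ) : |(digitStep a e n p).2| = |p.1| := by
  unfold digitStep
  split_ifs <;> simp

theorem odd_sign (S : AdjustedSystem a e t u f g) (n : ℕ) : Odd (e n) := by
  rcases S.sign n with he | he <;> simp [he]

theorem odd_digitStep (S : AdjustedSystem a e t u f g) (n : ℕ) {p : ℤ × ℤ} (h1 : Odd p.1)
    (h2 : Odd p.2) : Odd (digitStep a e n p).1 ∧ Odd (digitStep a e n p).2 := by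
  have h3 : Odd (e (n + 1) * p.2) := (S.odd_sign _).mul h2
  rcases Int.even_or_odd (a (n + 1)) with ha | ha
  · rw [digitStep_of_even ha]
    exact ⟨(ha.mul_right _).sub_odd h3, h1.neg⟩
  · rw [digitStep_of_odd ha]
    exact ⟨((ha.mul h1).sub_odd h3).neg.sub_odd odd_one, h1⟩

theorem exists_digitStep_eq (S : AdjustedSystem a e t u f g) (n : ℕ) {p : ℤ × ℤ} (h1 : Odd p.1)
    (h2 : Odd p.2) : ∃ q : ℤ × ℤ, Odd q.1 ∧ Odd q.2 ∧ digitStep a e n q = p := by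
  have hee : e (n + 1) * e (n + 1) = 1 := by rcases S.sign (n + 1) with he | he <;> simp [he]
  rcases Int.even_or_odd (a (n + 1)) with ha | ha
  · refine ⟨(-p.2, e (n + 1) * (a (n + 1) * -p.2 - p.1)), h2.neg,
      (S.odd_sign _).mul ((ha.mul_right _).sub_odd h1), ?_⟩
    rw [digitStep_of_even ha, Prod.ext_iff]
    exact ⟨by linear_combination (a (n + 1) * p.2 + p.1) * hee, neg_neg _⟩
  · refine ⟨(p.2, e (n + 1) * (a (n + 1) * p.2 + p.1 + 1)), h2,
      (S.odd_sign _).mul (((ha.mul h2).add_odd h1).add_odd odd_one), ?_⟩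
    rw [digitStep_of_odd ha, Prod.ext_iff]
    exact ⟨by linear_combination (a (n + 1) * p.2 + p.1 + 1) * hee, rfl⟩

theorem le_abs_pastForm (S : AdjustedSystem a e t u f g) (n : ℕ) (p : ℤ × ℤ) :
    |(p.2 : ℝ)| - |(p.1 : ℝ)| * u n - (1 - u n) ≤ |pastForm u f n p| := by
  obtain ⟨-, -, h3, h4⟩ := S.past_bounds n
  have hf : |f n| ≤ 1 - u n := abs_le.2 ⟨by linarith, h3⟩
  have h := abs_add_three (pastForm u f n p) (-(p.1 * u n)) (-f n)
  rw [abs_neg, abs_neg, abs_mul, abs_of_nonneg (S.u_nonneg n)] at h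
  rw [show (p.2 : ℝ) = pastForm u f n p + -(p.1 * u n) + -f n by unfold pastForm; ring]
  linarith

theorem le_abs_futureForm (S : AdjustedSystem a e t u f g) (n : ℕ) (p : ℤ × ℤ) :
    |(p.1 : ℝ)| - t n * |(p.2 : ℝ)| - g n ≤ |futureForm e t g n p| := by
  have he : |(e (n + 1) : ℝ)| = 1 := by rcases S.sign (n + 1) with he | he <;> simp [he]
  have h := abs_add_three (futureForm e t g n p) (e (n + 1) * t n * p.2) (-g n)
  rw [abs_neg, abs_mul, abs_mul, he, one_mul, abs_of_pos (S.t_pos n),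
    abs_of_nonneg (S.g_nonneg n)] at h
  rw [show (p.1 : ℝ) = futureForm e t g n p + e (n + 1) * t n * p.2 + -g n by
    unfold futureForm; ring]
  linarith

theorem mul_abs_fst_le (S : AdjustedSystem a e t u f g) (n : ℕ) (p : ℤ × ℤ) :
    a (n + 1) * |p.1| ≤ |p.2| + |(digitStep a e n p).1| + 1 := by
  have he : |e (n + 1)| = 1 := by rcases S.sign (n + 1) with he | he <;> simp [he]
  have ha0 : |a (n + 1)| = a (n + 1) := abs_of_nonneg (by linarith [S.two_le n])
  rcases Int.even_or_odd (a (n + 1)) with ha | ha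
  · have h := abs_add_le (e (n + 1) * p.2) (digitStep a e n p).1
    rw [show e (n + 1) * p.2 + (digitStep a e n p).1 = a (n + 1) * p.1 by
      rw [digitStep_of_even ha]; ring, abs_mul, abs_mul, he, ha0] at h
    linarith
  · have h := abs_add_three (e (n + 1) * p.2) (-(digitStep a e n p).1) (-1)
    rw [show e (n + 1) * p.2 + -(digitStep a e n p).1 + -1 = a (n + 1) * p.1 by
      rw [digitStep_of_odd ha]; ring, abs_mul, abs_mul, he, ha0, abs_neg, abs_neg, abs_one] at h
    linarith

theorem mul_add_le_mul_of_le {A B c x y : ℝ} (hA : 0.375 * x + 0.875 ≤ A)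
    (hB : (y - 2) / 3 ≤ B) (hx : 5 ≤ x) (hy : 3 ≤ y) (hxy : 3 * c ≤ x + y + 1) :
    0.226 * (c + 2 / 3) ≤ A * B := by
  have hAB : (0.375 * x + 0.875) * ((y - 2) / 3) ≤ A * B :=
    mul_le_mul hA hB (by linarith) (by linarith)
  have hxy' : 0 ≤ (x - 5) * (y - 3) := mul_nonneg (by linarith) (by linarith)
  rcases le_total c 3 with h | h <;> linarith

theorem one_le_t_mul (S : AdjustedSystem a e t u f g) (n : ℕ) :
    1 ≤ t n * (a (n + 1) + 2 / 3) := by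
  rw [← S.t_mul n]
  refine mul_le_mul_of_nonneg_left ?_ (S.t_pos n).le
  rcases S.sign (n + 2) with he | he <;> push_cast [he] <;>
    linarith [S.t_lt (n + 1), S.t_pos (n + 1)]

theorem extremalValue_le_normProd_of_localMin (S : AdjustedSystem a e t u f g) {p : ℤ × ℤ}
    (h1 : Odd p.1) (h2 : Odd p.2) (hlt : |p.1| < |p.2|)
    (hle : |p.1| ≤ |(digitStep a e n p).1|) : extremalValue ≤ normProd e t u f g n p := by
  by_cases hp : p.1 = 1 ∨ p.1 = -1
  · exact S.extremalValue_le_normProd_of_fst_unit n hp h2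
  have h3 : 3 ≤ |p.1| := by
    obtain ⟨k, hk⟩ := h1
    rcases abs_cases p.1 with h | h <;> omega
  have hlt2 : |p.1| + 2 ≤ |p.2| := by
    have h1' := odd_abs.2 h1
    have h2' := odd_abs.2 h2
    grind
  have hfst := S.mul_abs_fst_le n p
  have hfst3 : a (n + 1) * 3 ≤ |p.2| + |(digitStep a e n p).1| + 1 :=
    (mul_le_mul_of_nonneg_left h3 (by linarith [S.two_le n])).trans hfst
  have hsnd := abs_digitStep_snd (a := a) (e := e) n p
  have hpast := S.le_abs_pastForm n p
  have hfut := S.le_abs_futureForm (n + 1) (digitStep a e n p)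
  rify at h3 hlt2 hfst hfst3 hsnd hle
  rw [hsnd] at hfut
  have hu := mul_nonneg (by linarith [S.u_le n] : 0 ≤ 5 / 8 - u n)
    (by linarith : 0 ≤ |(p.1 : ℝ)| - 1)
  have ht := mul_nonneg (by linarith [S.t_lt (n + 1)] : 0 ≤ 2 / 3 - t (n + 1))
    (by linarith : 0 ≤ |(p.1 : ℝ)|)
  have hmul := mul_add_le_mul_of_le (c := a (n + 1))
    (A := |pastForm u f n p|) (B := |futureForm e t g (n + 1) (digitStep a e n p)|)
    (x := |(p.2 : ℝ)|) (y := |((digitStep a e n p).1 : ℝ)|) (by linarith)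
    (by linarith [S.g_le (n + 1), S.t_lt (n + 1)]) (by linarith) (by linarith) (by linarith)
  refine (le_div_iff₀ (S.gap_pos n)).2 (S.extremalValue_mul_gap_le_of_ge n ?_)
  rw [abs_mul, ← S.t_mul_abs_futureForm_digitStep]
  linarith [mul_le_mul_of_nonneg_left hmul (S.t_pos n).le, S.one_le_t_mul n]

/-- The first coordinate decreases in absolute value along the expansion until a local minimum is
reached. -/
theorem extremalValue_le_normProd (S : AdjustedSystem a e t u f g) (n : ℕ) (p : ℤ × ℤ)
    (h1 : Odd p.1) (h2 : Odd p.2) (hlt : |p.1| < |p.2|) :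
    extremalValue ≤ normProd e t u f g n p := by
  induction hk : p.1.natAbs using Nat.strong_induction_on generalizing n p with
  | _ k ih =>
    rcases le_or_gt |p.1| |(digitStep a e n p).1| with hle | hgt
    · exact S.extremalValue_le_normProd_of_localMin h1 h2 hlt hle
    · rw [← S.normProd_digitStep]
      obtain ⟨h1', h2'⟩ := S.odd_digitStep n h1 h2
      exact ih _ (hk ▸ Int.natAbs_lt_iff_sq_lt.2 (sq_lt_sq.2 hgt)) _ _ h1' h2'
        (by rwa [abs_digitStep_snd]) rfl

theorem normProd_zero (S : AdjustedSystem a e t u f g) (p : ℤ × ℤ) :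
    normProd e t u f g 0 p = |(p.2 : ℝ)| * |p.1 - t 0 * p.2 + g 0| := by
  simp [normProd, pastForm, futureForm, gap, S.u_zero, S.f_zero, S.sign_one, abs_mul]

theorem exists_normProd_zero_eq (S : AdjustedSystem a e t u f g) (n : ℕ) (p : ℤ × ℤ)
    (h1 : Odd p.1) (h2 : Odd p.2) :
    ∃ q : ℤ × ℤ, Odd q.1 ∧ Odd q.2 ∧ (8 / 5) ^ n * |pastForm u f n p| ≤ |(q.2 : ℝ)| ∧
      normProd e t u f g 0 q = normProd e t u f g n p := by
  induction n generalizing p with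
  | zero => exact ⟨p, h1, h2, by simp [pastForm, S.u_zero, S.f_zero], rfl⟩
  | succ n ih =>
    obtain ⟨r, hr1, hr2, rfl⟩ := S.exists_digitStep_eq n h1 h2
    obtain ⟨q, hq1, hq2, hle, heq⟩ := ih r hr1 hr2
    refine ⟨q, hq1, hq2, le_trans ?_ hle, heq.trans (S.normProd_digitStep n r).symm⟩
    rw [S.abs_pastForm_digitStep, pow_succ, mul_assoc]
    gcongr
    linarith [mul_le_mul_of_nonneg_right (S.u_le (n + 1)) (abs_nonneg (pastForm u f n r))]

theorem normProd_one_three_le (S : AdjustedSystem a e t u f g) (n : ℕ) :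
    normProd e t u f g n (1, 3) ≤ 50 := by
  obtain ⟨-, -, h3, h4⟩ := S.past_bounds n
  have hA : |pastForm u f n (1, 3)| ≤ 5 := by
    rw [abs_le]
    constructor <;> norm_num [pastForm] <;> linarith [S.u_nonneg n, S.u_lt_one n]
  have hB : |futureForm e t g n (1, 3)| ≤ 5 := by
    rw [abs_le]
    rcases S.sign (n + 1) with he | he <;> constructor <;> norm_num [futureForm, he] <;>
      linarith [S.g_nonneg n, S.g_le n, S.t_pos n, S.t_lt n]
  unfold normProd
  rw [abs_mul, div_le_iff₀ (S.gap_pos n)]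
  linarith [mul_le_mul hA hB (abs_nonneg _) (by norm_num), (S.gap_mem_Icc n).1]

theorem exists_normProd_le (S : AdjustedSystem a e t u f g) (n : ℕ) :
    ∃ p : ℤ × ℤ, Odd p.1 ∧ Odd p.2 ∧ (8 / 5) ^ n ≤ |(p.2 : ℝ)| ∧
      normProd e t u f g 0 p ≤ 50 := by
  obtain ⟨p, h1, h2, hle, heq⟩ := S.exists_normProd_zero_eq n (1, 3) odd_one (by decide)
  refine ⟨p, h1, h2, le_trans ?_ hle, heq.trans_le (S.normProd_one_three_le n)⟩
  refine le_mul_of_one_le_right (by positivity) (le_abs.2 (.inl ?_))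
  norm_num [pastForm]
  linarith [(S.past_bounds n).1, S.u_nonneg n]

end AdjustedSystem

/-! ### Adjusted nearest integer expansions -/

theorem nint_nonneg (x : ℝ) : 0 ≤ nint x := abs_nonneg _

theorem nint_le_abs_sub (x : ℝ) (l : ℤ) : nint x ≤ |x - l| := round_le x l

namespace ANIE

variable {α : ℝ} {n : ℕ}

theorem qs_pos_and_lt_succ (E : ANIE α) (n : ℕ) :
    0 < qs E.a E.e n ∧ qs E.a E.e n < qs E.a E.e (n + 1) := by
  induction n with
  | zero =>
    have := E.ha 1 le_rfl
    simp only [qs]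
    omega
  | succ n ih =>
    obtain ⟨h0, h1⟩ := ih
    have h2 := E.ha (n + 2) (by omega)
    refine ⟨h0.trans h1, ?_⟩
    simp only [qs]
    rcases E.he (n + 2) with he | he <;> rw [he] <;> nlinarith

theorem qs_pos (E : ANIE α) (n : ℕ) : (0 : ℝ) < qs E.a E.e n := by
  exact_mod_cast (E.qs_pos_and_lt_succ n).1

theorem abar_zero (E : ANIE α) : E.abar 0 = 0 := by simp [abar, ab]

theorem abar_succ (E : ANIE α) (n : ℕ) :
    E.abar (n + 1) = (qs E.a E.e n : ℝ) / qs E.a E.e (n + 1) := by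
  simp [abar, ab]

theorem abar_succ_pos (E : ANIE α) (n : ℕ) : 0 < E.abar (n + 1) := by
  rw [abar_succ]
  exact div_pos (E.qs_pos _) (E.qs_pos _)

theorem abar_succ_mul (E : ANIE α) (n : ℕ) :
    E.abar (n + 1) * (E.a (n + 1) + E.e (n + 1) * E.abar n) = 1 := by
  have h1 := E.qs_pos (n + 1)
  rw [abar_succ]
  cases n with
  | zero =>
    simp only [zero_add, qs] at h1 ⊢
    simp [abar_zero, h1.ne']
  | succ n =>
    have h2 := E.qs_pos (n + 1)
    rw [abar_succ]
    simp only [qs] at h1 ⊢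
    push_cast at h1 ⊢
    rw [← div_self h1.ne']
    field_simp

theorem t_mul (E : ANIE α) (n : ℕ) :
    E.t n * (E.a (n + 1) + E.e (n + 2) * E.t (n + 1)) = 1 := by
  have hne := (E.htpos n).ne'
  rw [E.hrec n] at hne ⊢
  exact one_div_mul_cancel fun h => hne (by rw [h, div_zero])

theorem abar_mul_le (E : ANIE α) (h2 : E.a (n + 1) = 2) (he : E.e (n + 1) = -1) :
    E.abar n * (1 + E.t (n + 1)) ≤ E.t (n + 1) := by
  have ht := E.htpos (n + 1)
  obtain _ | n := n
  · simpa [abar_zero] using ht.le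
  have hu := E.abar_succ_pos n
  have h : 1 / E.abar (n + 1) - 1 / E.t (n + 2) ≥ 1 := E.hcond2 (n + 2) (by omega) h2 he
  field_simp at h
  linarith

theorem t_mul_lt (E : ANIE α) (hα : α < 1 / 2) (h2 : E.a (n + 1) = 2) (he : E.e (n + 2) = -1) :
    E.t (n + 1) * (1 + E.abar n) < E.abar n := by
  have ht := E.htpos (n + 1)
  obtain _ | n := n
  · have h := E.t_mul 0
    have h0 := E.htpos 0
    push_cast [h2, he] at h
    nlinarith [E.ht0]
  have hu := E.abar_succ_pos n
  have h : 1 / E.t (n + 2) - 1 / E.abar (n + 1) > 1 := E.hcond3 (n + 2) (by omega) h2 he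
  field_simp at h
  linarith

theorem adjustedTails (E : ANIE α) (hα : α < 1 / 2) : AdjustedTails E.a E.e E.t E.abar where
  two_le n := E.ha _ n.succ_pos
  sign := E.he
  sign_one := E.he1
  t_pos := E.htpos
  t_lt_one := E.htlt1
  t_mul := E.t_mul
  u_zero := E.abar_zero
  u_mul := E.abar_succ_mul
  sign_of_two n := E.hcond1 _ n.succ_pos
  u_mul_le _ := E.abar_mul_le
  t_mul_lt _ := E.t_mul_lt hα
  not_two_neg_two n h1 he1 h2 he2 := by
    refine E.hcond4 (n + 1) 0 n.succ_pos ⟨by simp [h1, he1], by simp, ?_⟩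
    simp [h2, he2]
  not_two_neg_three_neg_two n h1 he1 h2 he2 h3 he3 := by
    refine E.hcond4 (n + 1) 1 n.succ_pos ⟨by simp [h1, he1], fun j hj => ?_, ?_⟩
    · simp [Nat.lt_one_iff.1 hj, h2, he2]
    · simp [h3, he3]

theorem D_zero (E : ANIE α) : E.D 0 = 1 := prod_range_zero _

theorem D_succ (E : ANIE α) (n : ℕ) : E.D (n + 1) = E.D n * E.t n := prod_range_succ _ _

theorem D_pos (E : ANIE α) (n : ℕ) : 0 < E.D n := prod_pos fun i _ => E.htpos i

theorem D_add_le (E : ANIE α) (hα : α < 1 / 2) (n k : ℕ) :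
    E.D (n + k) ≤ E.D n * (2 / 3) ^ k := by
  induction k with
  | zero => simp
  | succ k ih =>
    rw [← add_assoc, D_succ, pow_succ, ← mul_assoc]
    exact mul_le_mul ih ((E.adjustedTails hα).t_lt _).le (E.htpos _).le
      (mul_nonneg (E.D_pos n).le (by positivity))

theorem summable_mul_D (E : ANIE α) (hα : α < 1 / 2) {c : ℕ → ℝ} (hc : ∀ k, |c k| ≤ 1) :
    Summable fun k => c k * E.D k := by
  refine Summable.of_norm_bounded
    (summable_geometric_of_lt_one (r := 2 / 3) (by norm_num) (by norm_num)) fun k => ?_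
  have hD := E.D_add_le hα 0 k
  rw [zero_add, D_zero, one_mul] at hD
  rw [Real.norm_eq_abs, abs_mul, abs_of_pos (E.D_pos k)]
  exact (mul_le_of_le_one_left (E.D_pos k).le (hc k)).trans hD

theorem abs_sign_le_one (E : ANIE α) (n : ℕ) : |(E.e n : ℝ)| ≤ 1 := by
  rcases E.he n with h | h <;> simp [h]

theorem abs_lam_le_one (E : ANIE α) (n : ℕ) : |(E.lam n : ℝ)| ≤ 1 := by
  unfold lam
  split_ifs <;> simp [abs_pow]

theorem summable_lam_mul_D (E : ANIE α) (hα : α < 1 / 2) (n : ℕ) :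
    Summable fun k => (E.lam (n + k) : ℝ) * E.D (n + k) := by
  simpa only [add_comm n] using
    (summable_nat_add_iff n).2 (E.summable_mul_D hα E.abs_lam_le_one)

theorem dplus_eq (E : ANIE α) (hα : α < 1 / 2) (n : ℕ) :
    E.dplus n = E.t n * (E.lam (n + 1) + E.dplus (n + 1)) := by
  have h0 := E.D_pos n
  have ht := E.htpos n
  rw [dplus, dplus, (E.summable_lam_mul_D hα (n + 1)).tsum_eq_zero_add]
  simp only [add_zero, ← add_assoc, add_right_comm _ _ 1, E.D_succ n]
  field_simp

theorem abs_dplus_le (E : ANIE α) (hα : α < 1 / 2) (n : ℕ) : |E.dplus n| ≤ 3 := by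
  have h0 := E.D_pos n
  have hgeom : HasSum (fun k => E.D (n + 1) * (2 / 3 : ℝ) ^ k) (E.D (n + 1) * (1 - 2 / 3)⁻¹) :=
    (hasSum_geometric_of_lt_one (by norm_num) (by norm_num)).mul_left _
  have hle := tsum_of_norm_bounded hgeom
    (f := fun k => (E.lam (n + 1 + k) : ℝ) * E.D (n + 1 + k)) fun k => by
      rw [Real.norm_eq_abs, abs_mul, abs_of_pos (E.D_pos _)]
      exact (mul_le_of_le_one_left (E.D_pos _).le (E.abs_lam_le_one _)).trans (E.D_add_le hα _ k)
  have hD : E.D (n + 1) ≤ E.D n := by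
    rw [D_succ]
    exact mul_le_of_le_one_right h0.le (E.htlt1 n).le
  rw [dplus, abs_div, abs_of_pos h0, div_le_iff₀ h0]
  norm_num at hle
  linarith

theorem oddIdx_succ_of_odd (E : ANIE α) (h : Odd (E.a (n + 1))) :
    E.oddIdx (n + 1) = E.oddIdx n + 1 := by
  rw [oddIdx, ← insert_Icc_right_eq_Icc_add_one (by omega), filter_insert, if_pos h,
    card_insert_of_notMem (by simp), oddIdx]

theorem oddIdx_succ_of_even (E : ANIE α) (h : Even (E.a (n + 1))) :
    E.oddIdx (n + 1) = E.oddIdx n := by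
  rw [oddIdx, ← insert_Icc_right_eq_Icc_add_one (by omega), filter_insert,
    if_neg (Int.not_odd_iff_even.2 h), oddIdx]

/-- The sum `d_n^+`, normalised so that the next odd digit contributes positively. -/
noncomputable def futureSum (E : ANIE α) (n : ℕ) : ℝ := (-1) ^ (E.oddIdx n + 1) * E.dplus n

theorem futureSum_of_even (E : ANIE α) (hα : α < 1 / 2) (h : Even (E.a (n + 1))) :
    E.futureSum n = E.t n * E.futureSum (n + 1) := by
  have hlam : E.lam (n + 1) = 0 := if_neg (Int.not_odd_iff_even.2 h)
  rw [futureSum, futureSum, E.dplus_eq hα, E.oddIdx_succ_of_even h, hlam]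
  push_cast
  ring

theorem futureSum_of_odd (E : ANIE α) (hα : α < 1 / 2) (h : Odd (E.a (n + 1))) :
    E.futureSum n = E.t n * (1 - E.futureSum (n + 1)) := by
  have hlam : E.lam (n + 1) = (-1) ^ (E.oddIdx n + 1) := by
    rw [lam, if_pos h, E.oddIdx_succ_of_odd h]
  have hsq : ((-1 : ℝ) ^ (E.oddIdx n + 1)) ^ 2 = 1 := by rw [← pow_mul, pow_mul']; simp
  rw [futureSum, futureSum, E.dplus_eq hα, E.oddIdx_succ_of_odd h, hlam]
  push_cast
  linear_combination E.t n * hsq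

theorem abs_futureSum_sub_half_le (E : ANIE α) (hα : α < 1 / 2) (n : ℕ) :
    |E.futureSum n - 1 / 2| ≤ 1 / 2 := by
  refine forall_le_of_contraction (φ := fun n => |E.futureSum n - 1 / 2|) (q := 2 / 3) (C := 3)
    (by norm_num) (by norm_num) (by norm_num) (fun n => ?_) (fun δ hδ hle n => ?_) n
  · have h : |E.futureSum n| ≤ 3 := by
      simpa [futureSum, abs_mul, abs_pow] using E.abs_dplus_le hα n
    rw [abs_le] at h ⊢
    constructor <;> linarith
  · obtain ⟨h1, h2⟩ := abs_le.1 (hle (n + 1))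
    have h0 := E.htpos n
    have ht := (E.adjustedTails hα).t_lt n
    obtain ⟨x, hx, hx0, hx1⟩ : ∃ x, E.futureSum n = E.t n * x ∧ -δ ≤ x ∧ x ≤ 1 + δ := by
      rcases Int.even_or_odd (E.a (n + 1)) with h | h
      · exact ⟨_, E.futureSum_of_even hα h, by linarith, by linarith⟩
      · exact ⟨_, E.futureSum_of_odd hα h, by linarith, by linarith⟩
    simp only [hx, abs_le]
    constructor <;> nlinarith

theorem futureSum_mem_Icc (E : ANIE α) (hα : α < 1 / 2) (n : ℕ) :
    E.futureSum n ∈ Set.Icc 0 1 := by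
  have h := abs_le.1 (E.abs_futureSum_sub_half_le hα n)
  constructor <;> linarith [h.1, h.2]

theorem futureSum_le (E : ANIE α) (hα : α < 1 / 2) (n : ℕ) : E.futureSum n ≤ E.t n := by
  obtain ⟨h0, h1⟩ := E.futureSum_mem_Icc hα (n + 1)
  rcases Int.even_or_odd (E.a (n + 1)) with h | h
  · rw [E.futureSum_of_even hα h]
    exact mul_le_of_le_one_right (E.htpos n).le h1
  · rw [E.futureSum_of_odd hα h]
    exact mul_le_of_le_one_right (E.htpos n).le (by linarith)

/-- The sum `d_n^-`, normalised so that the last odd digit contributes positively; it is given by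
its recursion. -/
noncomputable def pastSum (E : ANIE α) : ℕ → ℝ
  | 0 => 0
  | n + 1 =>
    if Odd (E.a (n + 1)) then E.abar (n + 1) * (1 + E.e (n + 1) * E.pastSum n)
    else -(E.abar (n + 1) * (E.e (n + 1) * E.pastSum n))

theorem adjustedSystem (E : ANIE α) (hα : α < 1 / 2) :
    AdjustedSystem E.a E.e E.t E.abar E.pastSum E.futureSum where
  toAdjustedTails := E.adjustedTails hα
  f_zero := rfl
  f_succ_of_even _ h := if_neg (Int.not_odd_iff_even.2 h)
  f_succ_of_odd _ h := if_pos h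
  g_nonneg n := (E.futureSum_mem_Icc hα n).1
  g_le := E.futureSum_le hα
  g_of_even _ := E.futureSum_of_even hα
  g_of_odd _ := E.futureSum_of_odd hα

theorem hasSum_digit_mul_D (E : ANIE α) (hα : α < 1 / 2) :
    HasSum (fun k => ((E.a (k + 1) : ℝ) - 1 + E.e (k + 1)) * E.D (k + 1)) (1 + α) := by
  have hF : Summable fun k => E.D k + E.e (k + 1) * E.D (k + 1) := by
    have hD : Summable fun k => 1 * E.D k := E.summable_mul_D hα (by simp)
    simp only [one_mul] at hD
    have he := E.summable_mul_D hα E.abs_sign_le_one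
    exact hD.add ((summable_nat_add_iff (f := fun k => (E.e k : ℝ) * E.D k) 1).2 he)
  have htel := hF.hasSum.sub ((hasSum_nat_add_iff' 1).2 hF.hasSum)
  rw [sub_sub_cancel, sum_range_one, zero_add, E.D_succ 0, E.D_zero, E.he1, E.ht0, Int.cast_one,
    one_mul, one_mul] at htel
  refine htel.congr_fun fun k => ?_
  rw [E.D_succ (k + 1), E.D_succ k]
  linear_combination E.D k * E.t_mul k

theorem two_mul_gammaStar (E : ANIE α) (hα : α < 1 / 2) :
    2 * E.gammaStar = 1 + α - E.futureSum 0 := by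
  have hlam : HasSum (fun k => (E.lam (k + 1) : ℝ) * E.D (k + 1)) (-E.futureSum 0) := by
    have h := (E.summable_lam_mul_D hα 1).hasSum
    have h0 : -E.futureSum 0 = ∑' k, (E.lam (1 + k) : ℝ) * E.D (1 + k) := by
      simp [futureSum, dplus, oddIdx, D_zero]
    simpa only [h0, add_comm 1] using h
  have hsum := ((E.hasSum_digit_mul_D hα).add hlam).div_const 2
  have hγ : E.gammaStar = (1 + α + -E.futureSum 0) / 2 := by
    rw [gammaStar, ← hsum.tsum_eq]
    congr 1
    ext k
    ring
  rw [hγ]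
  ring

theorem normProd_adjustedSystem (E : ANIE α) (hα : α < 1 / 2) (m l : ℤ) :
    AdjustedSystem.normProd E.e E.t E.abar E.pastSum E.futureSum 0 (-1 - 2 * l, 1 - 2 * m) =
      2 * (|1 - 2 * (m : ℝ)| * |m * α - E.gammaStar - l|) := by
  have herr : ((-1 - 2 * l : ℤ) : ℝ) - α * ((1 - 2 * m : ℤ) : ℝ) + E.futureSum 0 =
      2 * (m * α - E.gammaStar - l) := by
    push_cast
    linear_combination E.two_mul_gammaStar hα
  rw [(E.adjustedSystem hα).normProd_zero, E.ht0, herr, abs_mul, abs_two]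
  push_cast
  ring

theorem abs_round_lt (E : ANIE α) (hα : α < 1 / 2) {m : ℤ}
    (hm : 2 * |E.gammaStar| + 3 < |(m : ℝ)|) :
    |-1 - 2 * round (m * α - E.gammaStar)| < |1 - 2 * m| := by
  have hα0 : 0 < α := E.ht0 ▸ E.htpos 0
  have hround := abs_le.1 (abs_sub_round (m * α - E.gammaStar))
  have hγ := abs_le.1 (le_refl |E.gammaStar|)
  have hmα : |2 * ((m : ℝ) * α)| ≤ |(m : ℝ)| := by
    rw [abs_mul, abs_mul, abs_two, abs_of_pos hα0]
    nlinarith [abs_nonneg (m : ℝ)]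
  have hl : |-1 - 2 * (round (m * α - E.gammaStar) : ℝ)| ≤ |(m : ℝ)| + 2 * |E.gammaStar| + 2 := by
    rw [abs_le] at hmα ⊢
    constructor <;> linarith
  have hm1 : 2 * |(m : ℝ)| ≤ |1 - 2 * (m : ℝ)| + 1 := by
    have h := abs_sub_abs_le_abs_sub (2 * (m : ℝ)) 1
    rw [abs_mul, abs_two, abs_one, abs_sub_comm] at h
    linarith
  rify
  linarith

theorem extremalValue_sub_le (E : ANIE α) (hα : α < 1 / 2) {m : ℤ}
    (hm : 2 * |E.gammaStar| + 3 < |(m : ℝ)|) :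
    extremalValue / 4 - extremalValue / 8 / (|(m : ℝ)| + 1 / 2) ≤
      |(m : ℝ)| * nint (m * α - E.gammaStar) := by
  have hle := (E.adjustedSystem hα).extremalValue_le_normProd 0
    (-1 - 2 * round (m * α - E.gammaStar), 1 - 2 * m) ⟨-1 - round (m * α - E.gammaStar), by ring⟩
    ⟨-m, by ring⟩ (E.abs_round_lt hα hm)
  rw [E.normProd_adjustedSystem hα, ← nint] at hle
  have hm1 : |1 - 2 * (m : ℝ)| ≤ 2 * |(m : ℝ)| + 1 := by
    have h := abs_sub (1 : ℝ) (2 * m)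
    rw [abs_mul, abs_two, abs_one] at h
    linarith
  have hx : 0 < |(m : ℝ)| + 1 / 2 := by positivity
  have hK : extremalValue / 4 / (|(m : ℝ)| + 1 / 2) ≤ nint (m * α - E.gammaStar) := by
    rw [div_le_iff₀ hx]
    linarith [mul_le_mul_of_nonneg_right hm1 (nint_nonneg (m * α - E.gammaStar))]
  calc extremalValue / 4 - extremalValue / 8 / (|(m : ℝ)| + 1 / 2)
      = |(m : ℝ)| * (extremalValue / 4 / (|(m : ℝ)| + 1 / 2)) := by
        field_simp
        ring
    _ ≤ |(m : ℝ)| * nint (m * α - E.gammaStar) := by gcongr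

theorem exists_lt_abs_mul_nint_le (E : ANIE α) (hα : α < 1 / 2) (B : ℝ) :
    ∃ m : ℤ, B < |1 - 2 * (m : ℝ)| ∧ |(m : ℝ)| * nint (m * α - E.gammaStar) ≤ 25 := by
  obtain ⟨n, hn⟩ := pow_unbounded_of_one_lt B (by norm_num : (1 : ℝ) < 8 / 5)
  obtain ⟨⟨_, _⟩, ⟨i, rfl⟩, ⟨j, rfl⟩, hlt, hle⟩ := (E.adjustedSystem hα).exists_normProd_le n
  obtain ⟨l, rfl⟩ : ∃ l, i = -1 - l := ⟨-1 - i, by ring⟩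
  obtain ⟨m, rfl⟩ : ∃ m, j = -m := ⟨-j, by ring⟩
  rw [show (2 * (-1 - l) + 1, 2 * -m + 1) = ((-1 - 2 * l, 1 - 2 * m) : ℤ × ℤ) by ring_nf,
    E.normProd_adjustedSystem hα] at hle
  have hm : |(m : ℝ)| ≤ |1 - 2 * (m : ℝ)| := by
    have h : |m| ≤ |1 - 2 * m| := by grind
    exact_mod_cast h
  refine ⟨m, hn.trans_le (hlt.trans_eq ?_), ?_⟩
  · push_cast
    ring_nf
  · linarith [mul_le_mul hm (nint_le_abs_sub (m * α - E.gammaStar) l) (nint_nonneg _)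
      (abs_nonneg _)]

theorem isCoboundedUnder_mul_nint (E : ANIE α) (hα : α < 1 / 2) :
    IsCoboundedUnder (· ≥ ·) cofinite fun m : ℤ => |(m : ℝ)| * nint (m * α - E.gammaStar) := by
  refine .of_frequently_le (a := 25) (frequently_cofinite_iff_infinite.2 ?_)
  refine .of_image (fun m : ℤ => |1 - 2 * (m : ℝ)|) (Set.infinite_of_forall_exists_gt fun B => ?_)
  obtain ⟨m, hB, hm⟩ := E.exists_lt_abs_mul_nint_le hα B
  exact ⟨_, ⟨m, hm, rfl⟩, hB⟩

end ANIE

/-- Theorem 3: for an adjusted nearest integer expansion of `α`,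
`M(α,γ_*) ≥ (√10-3)(7-√13)/(31-2√10-3√13) = 1/25.159…`. -/
theorem stmt3 (α : ℝ) (hirr : Irrational α) (h0 : 0 < α) (h12 : α < 1 / 2)
    (E : ANIE α) :
    Mval α E.gammaStar ≥
      (Real.sqrt 10 - 3) * (7 - Real.sqrt 13) /
        (31 - 2 * Real.sqrt 10 - 3 * Real.sqrt 13) := by
  rw [← extremalValue_eq]
  have habs : Tendsto (fun m : ℤ => |(m : ℝ)|) cofinite atTop :=
    tendsto_norm_cocompact_atTop.comp Int.tendsto_coe_cofinite
  have hlim : Tendsto (fun m : ℤ => extremalValue / 4 - extremalValue / 8 / (|(m : ℝ)| + 1 / 2))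
      cofinite (nhds (extremalValue / 4)) := by
    simpa using ((habs.atTop_add tendsto_const_nhds).const_div_atTop _).const_sub _
  calc extremalValue / 4
      = liminf (fun m : ℤ => extremalValue / 4 - extremalValue / 8 / (|(m : ℝ)| + 1 / 2))
          cofinite := hlim.liminf_eq.symm
    _ ≤ Mval α E.gammaStar := by
      refine liminf_le_liminf ?_ hlim.isBoundedUnder_ge (E.isCoboundedUnder_mul_nint h12)
      filter_upwards [habs.eventually_gt_atTop (2 * |E.gammaStar| + 3)] with m hm
      exact E.extremalValue_sub_le h12 hm
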